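/- arXiv:1601.01629 — 5 statements merged into one kernel-verified Lean document; each statement's English description precedes it below -/
import Mathlib

section
/- Let s ≥ 1 be an integer. In the polynomial ring 𝔽₂[u₁,…,u_s] over the field with two elements, the product over all non-zero tuples α = (α₁,…,α_s) ∈ (ℤ/2)^s \ {0} of the linear forms α₁u₁ + ⋯ + α_s u_s equals the sum over all permutations π of {1,…,s} of the monomials u_{π(1)}^(2^(s−1)) · u_{π(2)}^(2^(s−2)) ⋯ u_{π(s)}^(2^0). That is, ∏_{α ∈ (ℤ/2)^s \ {0}} (α₁u₁ + ⋯ + α_s u_s) = ∑_{π ∈ Sym_s} u_{π(1)}^(2^(s−1)) u_{π(2)}^(2^(s−2)) ⋯ u_{π(s)}^(2^0). -/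
section DicksonAux

variable {R : Type*} [CommRing R] [Algebra (ZMod 2) R] [CharP R 2]

lemma prod_cons_aux {s : ℕ} (f : (Fin (s+1) → ZMod 2) → R) :
    ∏ α, f α = (∏ α : Fin s → ZMod 2, f (Fin.cons 0 α)) * ∏ α : Fin s → ZMod 2, f (Fin.cons 1 α) := by
  rw [← (Fin.consEquiv (fun _ : Fin (s+1) => ZMod 2)).prod_comp, Fintype.prod_prod_type]
  exact Fin.prod_univ_two (f := fun a : Fin 2 => ∏ α : Fin s → ZMod 2, f (Fin.cons (α := fun _ => ZMod 2) a α))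

lemma exists_coeff (s : ℕ) (v : Fin s → R) : ∃ c : Fin (s+1) → R, c 0 = 1 ∧
    ∀ y, ∏ α : Fin s → ZMod 2, (y + ∑ i, α i • v i) = ∑ i : Fin (s+1), c i * y ^ 2 ^ (s - (i : ℕ)) := by
  induction s with
  | zero => exact ⟨fun _ => 1, rfl, fun y => by simp⟩
  | succ s ih =>
    obtain ⟨c, c0, hc⟩ := ih (fun i => v i.succ)
    set w := ∑ i : Fin (s+1), c i * (v 0) ^ 2 ^ (s - (i : ℕ)) with hw
    refine ⟨fun i => (Fin.snoc (fun i => c i ^ 2) 0 : Fin (s+2) → R) i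
      + (Fin.cons 0 (fun i => w * c i) : Fin (s+2) → R) i, ?_, fun y => ?_⟩
    · have : (0 : Fin (s+2)) = Fin.castSucc 0 := rfl
      simp only [Fin.cons_zero, add_zero]
      rw [this, Fin.snoc_castSucc]
      simp [c0]
    · rw [prod_cons_aux]
      simp only [Fin.sum_univ_succ (n := s) (f := fun i => _ • v i), Fin.cons_zero, Fin.cons_succ, zero_smul, zero_add, one_smul]
      simp only [← add_assoc]
      rw [hc, hc]
      simp only [add_mul, Finset.sum_add_distrib]
      rw [Fin.sum_univ_castSucc (n := s+1), Fin.sum_univ_succ (n := s+1)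
        (f := fun i => (Fin.cons 0 (fun i => w * c i) : Fin (s+2) → R) i * _)]
      simp only [Fin.snoc_castSucc, Fin.snoc_last, Fin.cons_zero, Fin.cons_succ, zero_mul, add_zero, zero_add]
      have h1 : ∑ i : Fin (s+1), c i * (y + v 0) ^ 2 ^ (s - (i : ℕ))
          = (∑ i : Fin (s+1), c i * y ^ 2 ^ (s - (i : ℕ))) + w := by
        rw [hw, ← Finset.sum_add_distrib]
        refine Finset.sum_congr rfl fun i _ => ?_
        rw [add_pow_char_pow, mul_add]
      have h2 : ∑ i : Fin (s+1), c i ^ 2 * y ^ 2 ^ (s + 1 - ((Fin.castSucc i : Fin (s+2)) : ℕ))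
          = (∑ i : Fin (s+1), c i * y ^ 2 ^ (s - (i : ℕ))) ^ 2 := by
        rw [CharTwo.sum_sq]
        refine Finset.sum_congr rfl fun i _ => ?_
        have : s + 1 - ((Fin.castSucc i : Fin (s+2)) : ℕ) = s - (i : ℕ) + 1 := by
          have := i.2
          simp only [Fin.val_castSucc]; omega
        rw [this, pow_succ 2, pow_mul, mul_pow]
      have h3 : ∑ i : Fin (s+1), w * c i * y ^ 2 ^ (s + 1 - (i.succ : ℕ))
          = w * (∑ i : Fin (s+1), c i * y ^ 2 ^ (s - (i : ℕ))) := by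
        rw [Finset.mul_sum]
        refine Finset.sum_congr rfl fun i _ => ?_
        simp [mul_assoc]
      rw [h1, h2, h3]
      ring

lemma moore_det (s : ℕ) (v : Fin s → R) :
    (∏ α ∈ Finset.univ.filter (fun α : Fin s → ZMod 2 => α ≠ 0), ∑ i, α i • v i)
      = (Matrix.of fun i j : Fin s => v j ^ 2 ^ (s - 1 - (i : ℕ))).det := by
  induction s with
  | zero =>
    rw [Matrix.det_isEmpty]
    apply Finset.prod_eq_one
    intro α h
    exact absurd (Subsingleton.elim α 0) (Finset.mem_filter.1 h).2
  | succ s ih =>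
    obtain ⟨c, c0, hc⟩ := exists_coeff s (fun i => v i.succ)
    have hz : ∀ j : Fin s, ∑ i : Fin (s+1), c i * (v j.succ) ^ 2 ^ (s - (i : ℕ)) = 0 := by
      intro j
      rw [← hc]
      apply Finset.prod_eq_zero (Finset.mem_univ (Pi.single j 1))
      rw [Finset.sum_eq_single j]
      · simp [CharTwo.add_self_eq_zero]
      · intro b _ hb; simp [hb]
      · simp
    set A : Matrix (Fin (s+1)) (Fin (s+1)) R :=
      Matrix.of fun i j => v j ^ 2 ^ (s + 1 - 1 - (i : ℕ)) with hA
    have h := Matrix.det_updateRow_sum A 0 c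
    rw [c0, one_smul] at h
    rw [← h, Matrix.det_succ_row_zero, Fin.sum_univ_succ]
    have hrow : ∀ j, (∑ k, c k • A k) j = ∑ i : Fin (s+1), c i * (v j) ^ 2 ^ (s - (i : ℕ)) := by
      intro j
      simp [hA, Finset.sum_apply]
    simp only [Matrix.updateRow_self, hrow, hz]
    have hsub : ((A.updateRow 0 (∑ k, c k • A k)).submatrix Fin.succ (Fin.succAbove 0))
        = Matrix.of fun i j : Fin s => v j.succ ^ 2 ^ (s - 1 - (i : ℕ)) := by
      ext i j
      have : s - ((i : ℕ) + 1) = s - 1 - i := by omega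
      simp [hA, Matrix.updateRow_apply, this]
    rw [hsub, ← ih (fun i => v i.succ), ← hc, Finset.prod_filter, Finset.prod_filter, prod_cons_aux]
    have e0 : ∀ α : Fin s → ZMod 2, (Fin.cons 0 α : Fin (s+1) → ZMod 2) = 0 ↔ α = 0 := by
      intro α
      constructor
      · intro h; funext i; simpa using congrFun h i.succ
      · rintro rfl; funext i; refine Fin.cases ?_ (fun i => ?_) i <;> simp
    have e1 : ∀ α : Fin s → ZMod 2, (Fin.cons 1 α : Fin (s+1) → ZMod 2) ≠ 0 := by
      intro α h
      have := congrFun h 0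
      simp at this
    simp only [ne_eq, e0, e1, not_false_eq_true, if_true, Fin.sum_univ_succ (n := s) (f := fun i => _ • v i), Fin.cons_zero, Fin.cons_succ, zero_smul, zero_add, one_smul]
    simp [mul_comm]

end DicksonAux


/-- **The top Dickson polynomial as a sum over permutations**: in `𝔽₂[u₁,…,u_s]`, the product
of all non-zero linear forms `α₁u₁ + ⋯ + α_s u_s`, `α ∈ (ℤ/2)ˢ \ {0}`, equals
`∑_{π ∈ Sym_s} u_{π(1)}^{2^{s−1}} u_{π(2)}^{2^{s−2}} ⋯ u_{π(s)}^{2^0}`. -/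
theorem top_dickson_eq_sum_over_permutations (s : ℕ) (hs : 1 ≤ s) :
    (∏ α ∈ Finset.univ.filter (fun α : Fin s → ZMod 2 => α ≠ 0),
        ∑ i, MvPolynomial.C (α i) * MvPolynomial.X i) =
      ∑ π : Equiv.Perm (Fin s),
        ∏ i : Fin s,
          (MvPolynomial.X (π i) : MvPolynomial (Fin s) (ZMod 2)) ^ 2 ^ (s - 1 - (i : ℕ)) := by
  have h := moore_det s (fun i => (MvPolynomial.X i : MvPolynomial (Fin s) (ZMod 2)))
  simp only [← MvPolynomial.smul_eq_C_mul]
  rw [h, ← Matrix.det_transpose, Matrix.det_apply]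
  refine Finset.sum_congr rfl fun π _ => ?_
  rcases Int.units_eq_one_or (Equiv.Perm.sign π) with hπ | hπ <;> simp [hπ, CharTwo.neg_eq]
end

section
/- Let s ≥ 1 and j ≥ 1 be integers and let q = ∏_{α ∈ (ℤ/2)^s \ {0}} (α₁u₁ + ⋯ + α_s u_s) ∈ 𝔽₂[u₁,…,u_s] be the top Dickson polynomial. Then the coefficient of the monomial u₁^j · u₂^(2j) · u₃^(4j) ⋯ u_s^(j·2^(s−1)) in the j-th power q^j equals 1 in 𝔽₂. -/
theorem zmod_two_eq_one : ∀ x : ZMod 2, x ≠ 0 → x = 1 := by decide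

theorem exists_monomialOrder_colex (s : ℕ) : ∃ m : MonomialOrder.{0, 0} (Fin s),
    ∀ a b : Fin s, a ≤ b →
      m.toSyn (Finsupp.single a 1) ≤ m.toSyn (Finsupp.single b 1) := by
  refine ⟨(MonomialOrder.lex : MonomialOrder (Fin s)ᵒᵈ), fun a b h => ?_⟩
  exact (Finsupp.Lex.single_le_iff (α := (Fin s)ᵒᵈ)).2 h

theorem coeff_linear_form (s : ℕ) (α : Fin s → ZMod 2) (e : Fin s →₀ ℕ) :
    MvPolynomial.coeff e (∑ i, MvPolynomial.C (α i) * MvPolynomial.X i) =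
      ∑ i, if Finsupp.single i 1 = e then α i else 0 := by
  classical
  rw [MvPolynomial.coeff_sum]
  refine Finset.sum_congr rfl fun i _ => ?_
  rw [MvPolynomial.coeff_C_mul, MvPolynomial.coeff_X]
  simp

theorem degree_linear_form (s : ℕ) (m : MonomialOrder (Fin s))
    (hm : ∀ a b : Fin s, a ≤ b →
      m.toSyn (Finsupp.single a 1) ≤ m.toSyn (Finsupp.single b 1))
    (α : Fin s → ZMod 2) (t : Fin s) (ht : α t ≠ 0) (ht' : ∀ i, t < i → α i = 0) :
    m.degree (∑ i, MvPolynomial.C (α i) * MvPolynomial.X i) = Finsupp.single t 1 := by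
  classical
  apply m.toSyn.injective
  apply le_antisymm
  · rw [MonomialOrder.degree_le_iff]
    intro c hc
    rw [MvPolynomial.mem_support_iff, coeff_linear_form] at hc
    obtain ⟨i, -, hi⟩ := Finset.exists_ne_zero_of_sum_ne_zero hc
    split_ifs at hi with h
    · rw [← h]
      apply hm
      by_contra hlt
      exact hi (ht' i (not_le.1 hlt))
    · exact absurd rfl hi
  · apply MonomialOrder.le_degree
    rw [MvPolynomial.mem_support_iff, coeff_linear_form]
    simpa [Finsupp.single_left_inj] using ht

theorem card_top_eq (s : ℕ) (l : Fin s) :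
    (Finset.univ.filter fun α : Fin s → ZMod 2 =>
      α l ≠ 0 ∧ ∀ i, l < i → α i = 0).card = 2 ^ (l : ℕ) := by
  classical
  have h : (Finset.univ.filter fun α : Fin s → ZMod 2 =>
      α l ≠ 0 ∧ ∀ i, l < i → α i = 0) =
      Fintype.piFinset fun i : Fin s =>
        if i < l then (Finset.univ : Finset (ZMod 2)) else if i = l then {1} else {0} := by
    ext α
    simp only [Finset.mem_filter, Finset.mem_univ, true_and, Fintype.mem_piFinset]
    constructor
    · rintro ⟨h1, h2⟩ i
      split_ifs with h h'
      · simp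
      · subst h'
        simpa using zmod_two_eq_one _ h1
      · simpa using h2 i (by omega)
    · intro h
      refine ⟨?_, fun i hi => ?_⟩
      · have := h l
        simp at this
        simp [this]
      · have := h i
        rw [if_neg (by omega), if_neg (by omega)] at this
        simpa using this
  rw [h, Fintype.card_piFinset]
  have : ∀ i : Fin s, (if i < l then (Finset.univ : Finset (ZMod 2))
      else if i = l then {1} else {0}).card = if i < l then 2 else 1 := by
    intro i
    split_ifs <;> simp [ZMod.card]
  simp only [this]
  rw [Finset.prod_ite]
  simp only [Finset.prod_const, one_pow, mul_one]
  rw [Finset.filter_gt_eq_Iio, Fin.card_Iio]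

/-- In the `j`-th power of the top Dickson polynomial
`q = ∏_{α ∈ (ℤ/2)ˢ \ {0}} (α₁u₁ + ⋯ + α_s u_s) ∈ 𝔽₂[u₁,…,u_s]`, the monomial
`u₁^j · u₂^(2j) · u₃^(4j) ⋯ u_s^(j·2^(s−1))` occurs with coefficient `1`. -/
theorem coeff_monomial_pow_top_dickson (s j : ℕ) (hs : 1 ≤ s) (hj : 1 ≤ j) :
    MvPolynomial.coeff
      (Finsupp.equivFunOnFinite.symm fun ℓ : Fin s => j * 2 ^ (ℓ : ℕ))
      ((∏ α ∈ Finset.univ.filter (fun α : Fin s → ZMod 2 => α ≠ 0),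
          ∑ i, MvPolynomial.C (α i) * MvPolynomial.X i) ^ j) = 1 := by
  classical
  obtain ⟨m, hm⟩ := exists_monomialOrder_colex s
  have htop : ∀ α : Fin s → ZMod 2, ∃ t : Fin s, α ≠ 0 →
      α t ≠ 0 ∧ ∀ i, t < i → α i = 0 := by
    intro α
    by_cases h : α = 0
    · exact ⟨⟨0, hs⟩, fun h' => absurd h h'⟩
    · obtain ⟨k, hk⟩ := Function.ne_iff.1 h
      obtain ⟨t, ht, hmax⟩ := (Finset.univ.filter fun i => α i ≠ 0).exists_max_image id
        ⟨k, by simpa using hk⟩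
      refine ⟨t, fun _ => ⟨by simpa using ht, fun i hi => ?_⟩⟩
      by_contra hne
      exact absurd (hmax i (by simpa using hne)) (not_le.2 hi)
  choose top htop using htop
  have hne : ∀ α : Fin s → ZMod 2, α ≠ 0 →
      (∑ i, MvPolynomial.C (α i) * MvPolynomial.X i : MvPolynomial (Fin s) (ZMod 2)) ≠ 0 := by
    intro α hα
    apply m.ne_zero_of_degree_ne_zero
    rw [degree_linear_form s m hm α (top α) (htop α hα).1 (htop α hα).2]
    simp
  have hdeg : m.degree ((∏ α ∈ Finset.univ.filter (fun α : Fin s → ZMod 2 => α ≠ 0),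
          ∑ i, MvPolynomial.C (α i) * MvPolynomial.X i) ^ j) =
      Finsupp.equivFunOnFinite.symm fun ℓ : Fin s => j * 2 ^ (ℓ : ℕ) := by
    rw [MonomialOrder.degree_pow, MonomialOrder.degree_prod (fun α hα => hne α (by simpa using hα)),
      Finset.sum_congr rfl (fun α hα => degree_linear_form s m hm α (top α)
        (htop α (by simpa using hα)).1 (htop α (by simpa using hα)).2)]
    ext l
    simp only [Finsupp.smul_apply, Finsupp.finsetSum_apply, smul_eq_mul,
      Finsupp.equivFunOnFinite_symm_apply_apply, Finsupp.single_apply]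
    congr 1
    rw [Finset.sum_boole, ← card_top_eq s l, Finset.filter_filter]
    simp only [Nat.cast_id]
    congr 1
    ext α
    simp only [Finset.mem_filter, Finset.mem_univ, true_and]
    constructor
    · rintro ⟨h, rfl⟩
      exact htop α h
    · rintro ⟨h1, h2⟩
      have h0 : α ≠ 0 := fun h => h1 (by simp [h])
      refine ⟨h0, ?_⟩
      rcases lt_trichotomy (top α) l with h | h | h
      · exact absurd ((htop α h0).2 l h) h1
      · exact h
      · exact absurd (h2 _ h) (htop α h0).1
  rw [← hdeg]
  apply zmod_two_eq_one
  rw [MonomialOrder.coeff_degree_ne_zero_iff]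
  exact pow_ne_zero _ (Finset.prod_ne_zero_iff.2 fun α hα => hne α (by simpa using hα))
end

section
/- Let s ≥ 1 and j ≥ 1 be integers and let q = ∏_{α ∈ (ℤ/2)^s \ {0}} (α₁u₁ + ⋯ + α_s u_s) ∈ 𝔽₂[u₁,…,u_s] be the top Dickson polynomial. Then q^j does not belong to the ideal of 𝔽₂[u₁,…,u_s] generated by u₁^(j+1), u₂^(2j+1), u₃^(4j+1), …, u_s^(j·2^(s−1)+1). -/
open MvPolynomial in
theorem aux_exists_order (s : ℕ) : ∃ m : MonomialOrder.{0, 0} (Fin s), ∀ i k : Fin s,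
    m.toSyn (Finsupp.single i 1) ≤ m.toSyn (Finsupp.single k 1) → i ≤ k := by
  refine ⟨MonomialOrder.lex (σ := (Fin s)ᵒᵈ), fun i k h => ?_⟩
  by_contra hik
  push Not at hik
  exact absurd h (not_le_of_gt
    (Finsupp.Lex.single_strictAnti (α := (Fin s)ᵒᵈ) (a := OrderDual.toDual i)
      (b := OrderDual.toDual k) hik))

open MvPolynomial in
theorem aux_coeff_single (s : ℕ) (α : Fin s → ZMod 2) (k : Fin s) :
    coeff (Finsupp.single k 1) (∑ i, C (α i) * X i : MvPolynomial (Fin s) (ZMod 2)) = α k := by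
  classical
  simp [coeff_sum, coeff_C_mul, coeff_X', Finsupp.single_left_inj]

open MvPolynomial in
theorem aux_support (s : ℕ) (α : Fin s → ZMod 2) (d : Fin s →₀ ℕ)
    (hd : coeff d (∑ i, C (α i) * X i : MvPolynomial (Fin s) (ZMod 2)) ≠ 0) :
    ∃ k, d = Finsupp.single k 1 := by
  classical
  by_contra! h
  apply hd
  rw [coeff_sum]
  refine Finset.sum_eq_zero fun i _ => ?_
  rw [coeff_C_mul, coeff_X', if_neg (h i).symm, mul_zero]

open MvPolynomial in
theorem aux_ne_zero (s : ℕ) (α : Fin s → ZMod 2) (hα : α ≠ 0) :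
    (∑ i, C (α i) * X i : MvPolynomial (Fin s) (ZMod 2)) ≠ 0 := by
  intro h
  apply hα
  funext k
  rw [← aux_coeff_single s α k, h]
  simp

theorem aux_card (s : ℕ) (l : Fin s) :
    (Finset.univ.filter (fun α : Fin s → ZMod 2 => α l ≠ 0 ∧ ∀ i, l < i → α i = 0)).card
      ≤ 2 ^ (l : ℕ) := by
  have h2 : Fintype.card (Fin l → ZMod 2) = 2 ^ (l : ℕ) := by simp [ZMod.card]
  rw [← h2, ← Finset.card_univ]
  refine Finset.card_le_card_of_injOn
    (fun α (i : Fin l) => α ⟨i, i.2.trans l.2⟩) (fun _ _ => Finset.mem_coe.2 (Finset.mem_univ _)) ?_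
  intro α hα β hβ hab
  simp only [Finset.coe_filter, Finset.mem_univ, true_and, Set.mem_setOf_eq] at hα hβ
  have key : ∀ x y : ZMod 2, x ≠ 0 → y ≠ 0 → x = y := by decide
  funext i
  rcases lt_trichotomy i l with h | h | h
  · exact congrFun hab ⟨i, h⟩
  · subst h
    exact key _ _ hα.1 hβ.1
  · rw [hα.2 i h, hβ.2 i h]

/-- The `j`-th power of the top Dickson polynomial
`q = ∏_{α ∈ (ℤ/2)ˢ \ {0}} (α₁u₁ + ⋯ + α_s u_s) ∈ 𝔽₂[u₁,…,u_s]` does not lie in the ideal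
generated by `u₁^(j+1), u₂^(2j+1), …, u_s^(j·2^(s−1)+1)`, i.e. by `u_ℓ^(j·2^(ℓ−1)+1)` for
`1 ≤ ℓ ≤ s`. -/
theorem pow_top_dickson_not_mem_ideal (s j : ℕ) (hs : 1 ≤ s) (hj : 1 ≤ j) :
    (∏ α ∈ Finset.univ.filter (fun α : Fin s → ZMod 2 => α ≠ 0),
        ∑ i, MvPolynomial.C (α i) * MvPolynomial.X i) ^ j ∉
      Ideal.span (Set.range fun ℓ : Fin s =>
        (MvPolynomial.X ℓ : MvPolynomial (Fin s) (ZMod 2)) ^ (j * 2 ^ (ℓ : ℕ) + 1)) := by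
  obtain ⟨m, hm⟩ := aux_exists_order s
  have hne : ∀ α ∈ Finset.univ.filter (fun α : Fin s → ZMod 2 => α ≠ 0),
      (∑ i, MvPolynomial.C (α i) * MvPolynomial.X i : MvPolynomial (Fin s) (ZMod 2)) ≠ 0 :=
    fun α hα => aux_ne_zero s α (Finset.mem_filter.1 hα).2
  have hset : (Set.range fun ℓ : Fin s =>
        (MvPolynomial.X ℓ : MvPolynomial (Fin s) (ZMod 2)) ^ (j * 2 ^ (ℓ : ℕ) + 1)) =
      (fun d => MvPolynomial.monomial d (1 : ZMod 2)) ''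
        Set.range (fun ℓ : Fin s => Finsupp.single ℓ (j * 2 ^ (ℓ : ℕ) + 1)) := by
    rw [← Set.range_comp]
    congr 1
    funext l
    simp [MvPolynomial.X_pow_eq_monomial]
  rw [hset, MvPolynomial.mem_ideal_span_monomial_image]
  intro h
  obtain ⟨_, ⟨l, rfl⟩, hl⟩ := h _ (m.degree_mem_support
    (pow_ne_zero j (Finset.prod_ne_zero_iff.2 hne)))
  have hl' := hl l
  rw [m.degree_pow, m.degree_prod hne] at hl'
  simp only [Finsupp.single_eq_same, Finsupp.smul_apply, Finsupp.finset_sum_apply,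
    smul_eq_mul] at hl'
  have hle : ∑ α ∈ Finset.univ.filter (fun α : Fin s → ZMod 2 => α ≠ 0),
      (m.degree (∑ i, MvPolynomial.C (α i) * MvPolynomial.X i :
        MvPolynomial (Fin s) (ZMod 2))) l ≤ 2 ^ (l : ℕ) := by
    refine le_trans ?_ (aux_card s l)
    rw [Finset.card_filter]
    refine le_trans (Finset.sum_le_sum (g := fun α : Fin s → ZMod 2 =>
      if α l ≠ 0 ∧ ∀ i, l < i → α i = 0 then 1 else 0) fun α hα => ?_)
      (Finset.sum_le_sum_of_subset (Finset.filter_subset _ _))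
    have hs := m.coeff_degree_ne_zero_iff.2 (hne α hα)
    obtain ⟨k, hk⟩ := aux_support s α _ hs
    rw [hk, aux_coeff_single] at hs
    rw [hk]
    by_cases hkl : k = l
    · subst hkl
      rw [if_pos]
      · simp
      · refine ⟨hs, fun i hi => ?_⟩
        by_contra hi0
        have := m.le_degree (MvPolynomial.mem_support_iff.2
          ((aux_coeff_single s α i).trans_ne hi0))
        rw [hk] at this
        exact absurd (hm _ _ this) (not_le_of_gt hi)
    · simp [Finsupp.single_apply, hkl]
  have := Nat.mul_le_mul_left j hle
  omega
end

section
/- Let s ≥ 1 and j ≥ 1 be integers. Let Y = ∏_{ℓ=1}^s S^(j·2^(ℓ−1)) be the product of unit spheres S(V_ℓ) where V_ℓ is a real vector space of dimension j·2^(ℓ−1)+1, with the group G = (ℤ/2)^s acting so that the ℓ-th generator ω_ℓ acts on (p₁,…,p_s) ∈ Y by sending p_ℓ to −p_ℓ and fixing the other coordinates. Let U_s = {(y_α)_{α ∈ (ℤ/2)^s} ∈ ℝ^((ℤ/2)^s) : ∑_α y_α = 0}, with G acting by β·(y_α)_α = (y_{β+α})_α, and let S(U_s^{⊕j}) be the unit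 sphere in the direct sum of j copies of U_s with the diagonal G-action. Then there exists no continuous G-equivariant map from Y to S(U_s^{⊕j}). -/
/-- The product `Y = ∏_{ℓ=1}^s S^{j·2^{ℓ−1}}` of unit spheres, where the `ℓ`-th factor is the
unit sphere of a real inner product space of dimension `j·2^{ℓ−1} + 1` (indexed here by
`ℓ ∈ Fin s`, so the `ℓ`-th sphere sits in `ℝ^{j·2^ℓ + 1}` for the 0-based index `ℓ`). -/
abbrev SphereProd (s j : ℕ) : Type :=
  {y : ∀ ℓ : Fin s, EuclideanSpace ℝ (Fin (j * 2 ^ (ℓ : ℕ) + 1)) // ∀ ℓ, ‖y ℓ‖ = 1}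

section
open Filter Topology

namespace BUP

theorem local_count {E F : Type*} [NormedAddCommGroup E] [NormedSpace ℂ E] [CompleteSpace E]
    [NormedAddCommGroup F] [NormedSpace ℂ F] [CompleteSpace F]
    (Φ : ℂ × E → F) (hΦ : Continuous Φ) (t0 : ℂ)
    (hd : ∀ z, Φ (t0, z) = 0 → ∃ L : ℂ × E →L[ℂ] F, HasStrictFDerivAt Φ L (t0, z) ∧
      (L ∘L .inr ℂ ℂ E).IsInvertible)
    (C : Set E) (hC : IsCompact C) (hCt : ∀ᶠ t in 𝓝 t0, ∀ z, Φ (t, z) = 0 → z ∈ C) :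
    {z | Φ (t0, z) = 0}.Finite ∧
    ∀ᶠ t in 𝓝 t0, {z | Φ (t, z) = 0}.ncard = {z | Φ (t0, z) = 0}.ncard := by
  classical
  set Z := {z | Φ (t0, z) = 0} with hZ
  have key : ∀ z ∈ Z, ∃ ψ : ℂ → E, Tendsto ψ (𝓝 t0) (𝓝 z) ∧
      (∀ᶠ v in 𝓝 (t0, z), Φ v = 0 ↔ ψ v.1 = v.2) ∧ ∀ᶠ t in 𝓝 t0, Φ (t, ψ t) = 0 := by
    intro z hz
    obtain ⟨L, hL, hi⟩ := hd z hz
    refine ⟨hL.implicitFunctionOfProdDomain hi, hL.tendsto_implicitFunctionOfProdDomain hi, ?_, ?_⟩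
    · have := hL.eventually_apply_eq_iff_implicitFunctionOfProdDomain hi
      rwa [show Φ (t0, z) = 0 from hz] at this
    · have := hL.eventually_apply_implicitFunctionOfProdDomain hi
      rwa [show Φ (t0, z) = 0 from hz] at this
  choose! ψ h1 h2 h3 using key
  have hZc : IsCompact Z := by
    refine hC.of_isClosed_subset ?_ (fun z hz => hCt.self_of_nhds z hz)
    exact isClosed_eq (hΦ.comp (by fun_prop)) continuous_const
  have hψ0 : ∀ z ∈ Z, ψ z t0 = z := fun z hz => ((h2 z hz).self_of_nhds).1 hz
  have hfin : Z.Finite := by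
    obtain ⟨t, ht, htc⟩ := hZc.elim_nhds_subcover (fun z => {z' | z' ∈ Z → z' = z}) (by
      intro z hz
      have h := (h2 z hz)
      have : Tendsto (fun z' : E => (t0, z')) (𝓝 z) (𝓝 (t0, z)) :=
        (Continuous.prodMk_right t0).tendsto z
      filter_upwards [this.eventually h] with z' hz' hm
      have := hz'.1 hm
      simp only [hψ0 z hz] at this
      exact this.symm)
    refine (t.finite_toSet).subset fun z hz => ?_
    obtain ⟨i, hi⟩ := Set.mem_iUnion.1 (htc hz)
    obtain ⟨hi, h⟩ := Set.mem_iUnion.1 hi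
    rw [h hz]; exact hi
  refine ⟨hfin, ?_⟩
  -- disjoint neighbourhoods
  obtain ⟨V, hV, hVd⟩ := hfin.t2_separation
  have hU : ∀ z ∈ Z, ∃ W : Set E, IsOpen W ∧ z ∈ W ∧ W ⊆ V z ∧
      ∀ᶠ t in 𝓝 t0, ∀ z' ∈ W, Φ (t, z') = 0 ↔ ψ z t = z' := by
    intro z hz
    have h := h2 z hz
    rw [nhds_prod_eq] at h
    obtain ⟨pa, hpa, pb, hpb, hab⟩ := eventually_prod_iff.1 h
    obtain ⟨W, hW1, hW2, hW3⟩ := mem_nhds_iff.1 (inter_mem hpb ((hV z).2.mem_nhds (hV z).1))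
    refine ⟨W, hW2, hW3, fun x hx => (hW1 hx).2, ?_⟩
    filter_upwards [hpa] with t ht z' hz'
    exact hab ht (hW1 hz').1
  choose! W hWo hWz hWV hWΦ using hU
  have hcov : ∀ᶠ t in 𝓝 t0, ∀ z ∈ C \ ⋃ z ∈ Z, W z, Φ (t, z) ≠ 0 := by
    apply IsCompact.eventually_forall_of_forall_eventually
    · exact hC.diff (isOpen_biUnion hWo)
    · intro z hz
      refine (hΦ.tendsto (t0, z)).eventually_ne ?_
      intro h0
      exact hz.2 (Set.mem_biUnion (show z ∈ Z from h0) (hWz z h0))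
  have e1 : ∀ᶠ t in 𝓝 t0, ∀ z ∈ Z, ψ z t ∈ W z :=
    (eventually_all_finite hfin).2 fun z hz => (h1 z hz).eventually ((hWo z hz).mem_nhds (hWz z hz))
  have e2 : ∀ᶠ t in 𝓝 t0, ∀ z ∈ Z, Φ (t, ψ z t) = 0 := (eventually_all_finite hfin).2 h3
  have e3 : ∀ᶠ t in 𝓝 t0, ∀ z ∈ Z, ∀ z' ∈ W z, Φ (t, z') = 0 ↔ ψ z t = z' :=
    (eventually_all_finite hfin).2 hWΦ
  filter_upwards [hcov, e1, e2, e3, hCt] with t a1 a2 a3 a4 a5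
  symm
  refine Set.ncard_congr (fun z _ => ψ z t) (fun z hz => a3 z hz) ?_ ?_
  · intro a b ha hb hab
    by_contra hne
    have := hVd ha hb hne
    exact Set.disjoint_left.1 this (hWV a ha (a2 a ha)) (hWV b hb (by rw [hab]; exact a2 b hb))
  · intro z hz
    have : z ∈ ⋃ z ∈ Z, W z := by
      by_contra hn
      exact a1 z ⟨a5 z hz, hn⟩ hz
    obtain ⟨i, hi⟩ := Set.mem_iUnion.1 this
    obtain ⟨hi, h⟩ := Set.mem_iUnion.1 hi
    exact ⟨i, hi, (a4 i hi z h).1 hz⟩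

theorem const_count {E F : Type*} [NormedAddCommGroup E] [NormedSpace ℂ E] [CompleteSpace E]
    [NormedAddCommGroup F] [NormedSpace ℂ F] [CompleteSpace F]
    (Φ : ℂ × E → F) (hΦ : Continuous Φ) (T : Set ℂ) (hT : IsPreconnected T)
    (hd : ∀ t ∈ T, ∀ z, Φ (t, z) = 0 → ∃ L : ℂ × E →L[ℂ] F, HasStrictFDerivAt Φ L (t, z) ∧
      (L ∘L .inr ℂ ℂ E).IsInvertible)
    (hp : ∀ t0 ∈ T, ∃ C : Set E, IsCompact C ∧ ∀ᶠ t in 𝓝 t0, ∀ z, Φ (t, z) = 0 → z ∈ C)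
    (a b : ℂ) (ha : a ∈ T) (hb : b ∈ T) :
    {z | Φ (b, z) = 0}.Finite ∧ {z | Φ (a, z) = 0}.ncard = {z | Φ (b, z) = 0}.ncard := by
  have key : ∀ t ∈ T, {z | Φ (t, z) = 0}.Finite ∧
    ∀ᶠ t' in 𝓝 t, {z | Φ (t', z) = 0}.ncard = {z | Φ (t, z) = 0}.ncard := by
    intro t ht
    obtain ⟨C, hC, h⟩ := hp t ht
    exact local_count Φ hΦ t (hd t ht) C hC h
  refine ⟨(key b hb).1, ?_⟩
  refine hT.constant (f := fun t => {z | Φ (t, z) = 0}.ncard) ?_ ha hb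
  intro t ht
  apply ContinuousAt.continuousWithinAt
  rw [ContinuousAt, nhds_discrete ℕ, tendsto_pure]
  exact (key t ht).2

theorem mv_strict {σ : Type*} [Fintype σ] (p : MvPolynomial σ ℂ) (x : σ → ℂ) :
    HasStrictFDerivAt (fun y : σ → ℂ => MvPolynomial.eval y p)
      (∑ i, MvPolynomial.eval x (MvPolynomial.pderiv i p) •
        (ContinuousLinearMap.proj i : (σ → ℂ) →L[ℂ] ℂ)) x := by
  classical
  induction p using MvPolynomial.induction_on with
  | C a =>
    simp only [MvPolynomial.eval_C]
    refine (hasStrictFDerivAt_const (𝕜 := ℂ) a x).congr_fderiv ?_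
    ext v
    simp
  | add p q hp hq =>
    simp only [map_add]
    refine (hp.add hq).congr_fderiv ?_
    ext v
    simp [add_mul, Finset.sum_add_distrib]
  | mul_X p n hp =>
    simp only [map_mul, MvPolynomial.eval_X]
    refine (hp.mul (hasStrictFDerivAt_apply (𝕜 := ℂ) n x)).congr_fderiv ?_
    ext v
    simp [MvPolynomial.pderiv_X, Pi.single_apply, add_mul, Finset.sum_add_distrib, mul_assoc,
      Finset.mul_sum, apply_ite, ite_mul]

end BUP
end

section
open Filter Topology MvPolynomial

namespace BUP

/-- homogeneous coordinates on the product of projective spaces -/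
abbrev Vr {ι : Type} (n : ι → ℕ) : Type := Σ l : ι, Fin (n l + 1)

/-- multidegree weights -/
def wt {ι : Type} [DecidableEq ι] (n : ι → ℕ) : Vr n → (ι → ℕ) := fun a => Pi.single a.1 1

theorem weight_wt {ι : Type} [Fintype ι] [DecidableEq ι] (n : ι → ℕ) (m : Vr n →₀ ℕ) (l : ι) :
    Finsupp.weight (wt n) m l = ∑ i, m ⟨l, i⟩ := by
  rw [Finsupp.weight_apply, Finsupp.sum_fintype _ _ (by simp), Finset.sum_apply,
    Fintype.sum_sigma]
  rw [Finset.sum_eq_single l]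
  · simp [wt]
  · intro b _ hb
    simp [wt, hb.symm]
  · simp

theorem finite_weight {ι : Type} [Fintype ι] [DecidableEq ι] (n : ι → ℕ) (e : ι → ℕ) :
    {m : Vr n →₀ ℕ | Finsupp.weight (wt n) m = e}.Finite := by
  refine (Set.finite_Iic (Finsupp.equivFunOnFinite.symm (fun a : Vr n => e a.1))).subset ?_
  intro m hm a
  simp only [Finsupp.equivFunOnFinite_symm_apply_apply]
  rw [← (show Finsupp.weight (wt n) m = e from hm), weight_wt]
  exact Finset.single_le_sum (f := fun i => m ⟨a.1, i⟩) (fun _ _ => Nat.zero_le _)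
    (Finset.mem_univ a.2)

attribute [local instance] MvPolynomial.weightedGradedAlgebra

/-- no common zero in the product of projective spaces implies that all monomials of
large multidegree are in the ideal -/
theorem exists_degree {ι : Type} [Fintype ι] [DecidableEq ι] (n : ι → ℕ) {κ : Type} [Fintype κ]
    (P : κ → MvPolynomial (Vr n) ℂ)
    (h0 : ∀ x : Vr n → ℂ, (∀ l, ∃ i, x ⟨l, i⟩ ≠ 0) → ∃ k, eval x (P k) ≠ 0) :
    ∃ E : ℕ, ∀ m : Vr n →₀ ℕ, Finsupp.weight (wt n) m = (fun _ => E) →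
      monomial m (1 : ℂ) ∈ Ideal.span (Set.range P) := by
  classical
  set I := Ideal.span (Set.range P)
  have h1 : ∀ c : (∀ l, Fin (n l + 1)), (∏ l, (X ⟨l, c l⟩ : MvPolynomial (Vr n) ℂ)) ∈ I.radical := by
    intro c
    rw [← vanishingIdeal_zeroLocus_eq_radical (K := ℂ), mem_vanishingIdeal_iff]
    intro x hx
    by_contra hne
    obtain ⟨k, hk⟩ := h0 x (by
      intro l
      refine ⟨c l, fun h => hne ?_⟩
      simp only [map_prod, aeval_X]
      exact Finset.prod_eq_zero (Finset.mem_univ l) h)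
    exact hk (hx _ (Ideal.subset_span ⟨k, rfl⟩))
  choose r hr using h1
  set R := ∑ c, r c
  have h2 : ∀ c : (∀ l, Fin (n l + 1)), (∏ l, (X ⟨l, c l⟩ : MvPolynomial (Vr n) ℂ)) ^ R ∈ I := by
    intro c
    have : r c ≤ R := Finset.single_le_sum (f := r) (fun _ _ => Nat.zero_le _) (Finset.mem_univ c)
    rw [← Nat.sub_add_cancel this, pow_add]
    exact I.mul_mem_left _ (hr c)
  refine ⟨(∑ l, (n l + 1)) * R, fun m hm => ?_⟩
  have h3 : ∀ l, ∃ i, R ≤ m ⟨l, i⟩ := by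
    intro l
    by_contra! hlt
    have e1 := congrFun hm l
    rw [weight_wt] at e1
    have hRpos : 0 < R := lt_of_le_of_lt (Nat.zero_le _) (hlt 0)
    have e2 : ∑ i, m ⟨l, i⟩ < ∑ i : Fin (n l + 1), R :=
      Finset.sum_lt_sum_of_nonempty ⟨0, Finset.mem_univ _⟩ (fun i _ => hlt i)
    simp only [Finset.sum_const, Finset.card_univ, Fintype.card_fin, smul_eq_mul] at e2
    have e3 : n l + 1 ≤ ∑ l, (n l + 1) :=
      Finset.single_le_sum (f := fun l => n l + 1) (fun _ _ => Nat.zero_le _) (Finset.mem_univ l)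
    have := Nat.mul_le_mul_right R e3
    omega
  choose c hc using h3
  have h4 := h2 c
  set u : Vr n →₀ ℕ := ∑ l, Finsupp.single ⟨l, c l⟩ R with hu
  have h5 : (∏ l, (X ⟨l, c l⟩ : MvPolynomial (Vr n) ℂ)) ^ R = monomial u 1 := by
    rw [hu, monomial_sum_one, ← Finset.prod_pow]
    simp [X_pow_eq_monomial]
  have hle : u ≤ m := by
    intro a
    rw [hu, Finsupp.finsetSum_apply]
    rw [Finset.sum_eq_single a.1]
    · obtain ⟨l, i⟩ := a
      simp only [Finsupp.single_apply]
      split_ifs with h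
      · have := hc l
        rw [h] at this; exact this
      · exact Nat.zero_le _
    · intro b _ hb
      rw [Finsupp.single_apply, if_neg]
      intro h; apply hb; rw [← h]
    · simp
  rw [show m = (m - u) + u from (tsub_add_cancel_of_le hle).symm, ← one_mul (1 : ℂ),
    ← monomial_mul, ← h5]
  exact I.mul_mem_left _ h4

theorem elim {ι : Type} [Fintype ι] [DecidableEq ι] (n : ι → ℕ) {κ : Type} [Fintype κ]
    (Φ : κ → MvPolynomial (Vr n) (Polynomial ℂ)) (d : κ → ι → ℕ)
    (hΦ : ∀ k, IsWeightedHomogeneous (wt n) (Φ k) (d k)) (t0 : ℂ)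
    (h0 : ∀ x : Vr n → ℂ, (∀ l, ∃ i, x ⟨l, i⟩ ≠ 0) →
      ∃ k, eval x (map (Polynomial.evalRingHom t0) (Φ k)) ≠ 0) :
    ∃ B : Set ℂ, B.Finite ∧ t0 ∉ B ∧ ∀ t ∉ B, ∀ x : Vr n → ℂ, (∀ l, ∃ i, x ⟨l, i⟩ ≠ 0) →
      ∃ k, eval x (map (Polynomial.evalRingHom t) (Φ k)) ≠ 0 := by
  classical
  obtain ⟨E, hE⟩ := exists_degree n _ h0
  set A := {m : Vr n →₀ ℕ | Finsupp.weight (wt n) m = fun _ => E} with hA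
  have hAf : A.Finite := finite_weight n _
  have : Fintype A := hAf.fintype
  have hg : ∀ a : A, ∃ g : κ → MvPolynomial (Vr n) ℂ,
      ∑ k, g k * map (Polynomial.evalRingHom t0) (Φ k) = monomial a.1 1 := fun a =>
    Ideal.mem_span_range_iff_exists_fun.1 (hE a.1 a.2)
  choose g hg using hg
  let q : A → MvPolynomial (Vr n) (Polynomial ℂ) := fun a =>
    ∑ k, map Polynomial.C (g a k) * Φ k
  have hq : ∀ t a, map (Polynomial.evalRingHom t) (q a) =
      ∑ k, g a k * map (Polynomial.evalRingHom t) (Φ k) := by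
    intro t a
    simp only [q, map_sum, map_mul]
    refine Finset.sum_congr rfl fun k _ => ?_
    congr 1
    have : (Polynomial.evalRingHom t).comp Polynomial.C = RingHom.id ℂ := by ext; simp
    rw [MvPolynomial.map_map, this, MvPolynomial.map_id]
  let M : Matrix A A (Polynomial ℂ) := fun a b => coeff b.1 (q a)
  have hM0 : (Polynomial.evalRingHom t0).mapMatrix M = 1 := by
    ext a b
    show Polynomial.evalRingHom t0 (coeff b.1 (q a)) = _
    rw [← coeff_map, hq, hg, coeff_monomial, Matrix.one_apply]
    simp [Subtype.ext_iff]
  refine ⟨{t | M.det.IsRoot t}, ?_, ?_, ?_⟩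
  · apply Polynomial.finite_setOfPred_isRoot
    intro h
    have := congrArg (Polynomial.evalRingHom t0) h
    rw [RingHom.map_det, hM0] at this
    simp at this
  · intro h
    have h : Polynomial.evalRingHom t0 M.det = 0 := h
    rw [RingHom.map_det, hM0] at h
    simp at h
  · intro t ht x hx
    by_contra! hz
    apply ht
    show Polynomial.evalRingHom t M.det = 0
    rw [RingHom.map_det]
    rw [← Matrix.exists_mulVec_eq_zero_iff]
    refine ⟨fun b => eval x (monomial b.1 1), ?_, ?_⟩
    · choose c hc using hx
      intro h
      let u : Vr n →₀ ℕ := ∑ l, Finsupp.single ⟨l, c l⟩ E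
      have hu : u ∈ A := by
        show Finsupp.weight (wt n) u = _
        ext l
        simp only [u, map_sum, Finsupp.weight_single, wt, Finset.sum_apply, Pi.smul_apply,
          Pi.single_apply]
        simp
      have := congrFun h ⟨u, hu⟩
      simp only [u, monomial_sum_one, map_prod, Pi.zero_apply] at this
      obtain ⟨l, _, hl⟩ := Finset.prod_eq_zero_iff.1 this
      rw [← X_pow_eq_monomial] at hl
      simp only [map_pow, eval_X] at hl
      exact hc l (by by_contra h; exact pow_ne_zero _ h hl)
    · ext a
      let J := Ideal.span (Set.range fun k => map (Polynomial.evalRingHom t) (Φ k))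
      have hJ : J.IsHomogeneous (weightedHomogeneousSubmodule ℂ (wt n)) := by
        apply Ideal.homogeneous_span
        rintro _ ⟨k, rfl⟩
        refine ⟨d k, ?_⟩
        rw [mem_weightedHomogeneousSubmodule]
        intro m hm
        apply hΦ k
        rw [coeff_map] at hm
        intro h; rw [h] at hm; simp at hm
      have hmem : map (Polynomial.evalRingHom t) (q a) ∈ J := by
        rw [hq]
        exact Ideal.sum_mem _ fun k _ => J.mul_mem_left _ (Ideal.subset_span ⟨k, rfl⟩)
      have hcomp := weightedHomogeneousComponent_mem_of_mem ℂ (wt n) hJ hmem (fun _ => E)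
      have hev : ∀ p ∈ J, eval x p = 0 := by
        intro p hp
        have : J ≤ RingHom.ker (eval x) := Ideal.span_le.2 (by
          rintro _ ⟨k, rfl⟩
          exact hz k)
        exact this hp
      have h1 := hev _ hcomp
      have h2 : weightedHomogeneousComponent (wt n) (fun _ => E)
          (map (Polynomial.evalRingHom t) (q a)) =
          ∑ b : A, monomial b.1 (Polynomial.evalRingHom t (M a b)) := by
        ext m
        rw [coeff_weightedHomogeneousComponent, coeff_sum]
        simp only [coeff_monomial]
        split_ifs with hm
        · rw [Finset.sum_eq_single (⟨m, hm⟩ : A)]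
          · simp [M, coeff_map]
          · intro b _ hb
            rw [if_neg]
            intro h; apply hb; exact Subtype.ext h
          · simp
        · symm
          apply Finset.sum_eq_zero
          intro b _
          rw [if_neg]
          intro h; apply hm; rw [← h]; exact b.2
      rw [h2] at h1
      simp only [Matrix.mulVec, dotProduct, RingHom.mapMatrix_apply, Matrix.map_apply,
        Pi.zero_apply]
      rw [← h1, map_sum]
      refine Finset.sum_congr rfl fun b _ => ?_
      simp [eval_monomial]

end BUP
end

section
open Filter Topology MvPolynomial

namespace BUP
set_option linter.unusedSectionVars false

/-- affine coordinates -/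
abbrev Ta {ι : Type} (n : ι → ℕ) : Type := Σ l : ι, Fin (n l)

theorem block_zero {N : ℕ} {Q : Type*} (u : Fin (N + 1) → ℂ) (S : Finset Q) (c : Q → ℂ)
    (hc : Set.InjOn c S) (hS : N < S.card)
    (h : ∀ q ∈ S, ∑ i : Fin (N + 1), c q ^ (i : ℕ) * u i = 0) : u = 0 := by
  classical
  have : Nonempty (Fin (N + 1) ↪ S) := by
    apply Function.Embedding.nonempty_of_card_le
    simp; omega
  obtain ⟨e⟩ := this
  refine Matrix.eq_zero_of_forall_index_sum_pow_mul_eq_zero (f := fun i => c (e i).1) ?_ ?_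
  · intro i j hij
    exact e.injective (Subtype.ext (hc (e i).2 (e j).2 hij))
  · intro j
    exact h _ (e j).2

/-- linear form -/
noncomputable def Lf {ι : Type} (n : ι → ℕ) (R : Type*) [CommRing R] (r : ℕ) (l : ι) :
    MvPolynomial (Vr n) R := ∑ i : Fin (n l + 1), C ((r : R) ^ (i : ℕ)) * X ⟨l, i⟩

abbrev Fac {ι : Type} {n : ι → ℕ} (d : Ta n → ι → ℕ) : Type :=
  Σ k : Ta n, Σ l : ι, Fin (d k l)

section
variable {ι : Type} [Fintype ι] [DecidableEq ι] {n : ι → ℕ} (d : Ta n → ι → ℕ)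

noncomputable def cc (q : Fac d) : ℕ := (Fintype.equivFin (Fac d) q : ℕ) + 1

theorem cc_inj : Function.Injective (cc d) := by
  intro a b h
  simp only [cc, add_left_inj] at h
  exact (Fintype.equivFin (Fac d)).injective (Fin.ext h)

theorem cc_pos (q) : cc d q ≠ 0 := Nat.succ_ne_zero _

noncomputable def Hp (R : Type*) [CommRing R] (k : Ta n) : MvPolynomial (Vr n) R :=
  ∏ p : (Σ l, Fin (d k l)), Lf n R (cc d ⟨k, p⟩) p.1

theorem map_Lf {R S : Type*} [CommRing R] [CommRing S] (f : R →+* S) (r : ℕ) (l : ι) :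
    MvPolynomial.map f (Lf n R r l) = Lf n S r l := by
  simp [Lf, map_sum]

theorem map_Hp {R S : Type*} [CommRing R] [CommRing S] (f : R →+* S) (k : Ta n) :
    MvPolynomial.map f (Hp d R k) = Hp d S k := by
  simp [Hp, map_prod, map_Lf]

theorem Lf_hom (R : Type*) [CommRing R] (r : ℕ) (l : ι) :
    IsWeightedHomogeneous (wt n) (Lf n R r l) (Pi.single l 1) := by
  refine IsWeightedHomogeneous.sum _ _ _ fun i _ => ?_
  refine IsWeightedHomogeneous.C_mul ?_ _
  exact isWeightedHomogeneous_X R (wt n) (⟨l, i⟩ : Vr n)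

theorem Hp_hom (R : Type*) [CommRing R] (k : Ta n) :
    IsWeightedHomogeneous (wt n) (Hp d R k) (d k) := by
  have := IsWeightedHomogeneous.prod Finset.univ (fun p : (Σ l, Fin (d k l)) =>
    Lf n R (cc d ⟨k, p⟩) p.1) (fun p => Pi.single p.1 1) (w := wt n) (fun p _ => Lf_hom R _ _)
  suffices h : (∑ p : (Σ l, Fin (d k l)), (Pi.single p.1 1 : ι → ℕ)) = d k by
    rw [h] at this; exact this
  ext l
  rw [Finset.sum_apply, Fintype.sum_sigma, Finset.sum_eq_single l]
  · simp
  · intro b _ hb; simp [hb.symm]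
  · simp

theorem eval_Lf (x : Vr n → ℂ) (r : ℕ) (l : ι) :
    eval x (Lf n ℂ r l) = ∑ i : Fin (n l + 1), (r : ℂ) ^ (i : ℕ) * x ⟨l, i⟩ := by
  simp [Lf, map_sum]

theorem block_zero0 {N : ℕ} (u : Fin (N + 1) → ℂ) (h0 : u 0 = 0)
    (a : (∀ k, Σ l, Fin (d k l))) (S : Finset (Ta n)) (hS : N ≤ S.card)
    (h : ∀ k ∈ S, ∑ i : Fin (N + 1), (cc d ⟨k, a k⟩ : ℂ) ^ (i : ℕ) * u i = 0) : u = 0 := by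
  classical
  refine block_zero u (Finset.insertNone S)
    (fun q => (q.elim 0 fun k => (cc d ⟨k, a k⟩ : ℂ))) ?_ (by simp; omega) ?_
  · rintro (_ | k) _ (_ | k') _ h
    · rfl
    · simp only [Option.elim_none, Option.elim_some] at h
      exact absurd h.symm (by exact_mod_cast cc_pos d _)
    · simp only [Option.elim_none, Option.elim_some] at h
      exact absurd h (by exact_mod_cast cc_pos d _)
    · simp only [Option.elim_some] at h
      have := cc_inj d (Nat.cast_injective h)
      exact congrArg some (congrArg Sigma.fst this)
  · rintro (_ | k) hq
    · simp only [Option.elim_none]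
      rw [Finset.sum_eq_single 0]
      · simp [h0]
      · intro b _ hb
        rw [zero_pow (by simpa using hb), zero_mul]
      · simp
    · exact h k (by simpa using hq)

theorem zeros_struct (x : Vr n → ℂ) (hx : ∀ l, ∃ i, x ⟨l, i⟩ ≠ 0)
    (hz : ∀ k, eval x (Hp d ℂ k) = 0) :
    ∃ a : (∀ k, Σ l, Fin (d k l)),
      (∀ k p, eval x (Lf n ℂ (cc d ⟨k, p⟩) p.1) = 0 ↔ p = a k) ∧
      ∀ l, (Finset.univ.filter fun k => (a k).1 = l).card = n l := by
  classical
  have ha : ∀ k, ∃ p : (Σ l, Fin (d k l)), eval x (Lf n ℂ (cc d ⟨k, p⟩) p.1) = 0 := by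
    intro k
    have := hz k
    rw [Hp, map_prod] at this
    obtain ⟨p, _, hp⟩ := Finset.prod_eq_zero_iff.1 this
    exact ⟨p, hp⟩
  choose a ha using ha
  let S : ι → Finset (Fac d) := fun l =>
    Finset.univ.filter fun q => q.2.1 = l ∧ eval x (Lf n ℂ (cc d q) q.2.1) = 0
  have hS : ∀ l, (S l).card ≤ n l := by
    intro l
    by_contra! hlt
    have := block_zero (fun i => x ⟨l, i⟩) (S l) (fun q => (cc d q : ℂ))
      (fun a _ b _ h => cc_inj d (Nat.cast_injective (R := ℂ) h)) hlt (by
        intro q hq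
        obtain ⟨h1, h2⟩ := (Finset.mem_filter.1 hq).2
        rw [eval_Lf] at h2
        subst h1
        exact h2)
    obtain ⟨i, hi⟩ := hx l
    exact hi (congrFun this i)
  have hF : ∀ l, (Finset.univ.filter fun k => (a k).1 = l).card ≤ (S l).card := by
    intro l
    refine Finset.card_le_card_of_injOn (fun k => ⟨k, a k⟩) ?_ ?_
    · intro k hk
      have := (Finset.mem_filter.1 hk).2
      exact Finset.mem_filter.2 ⟨Finset.mem_univ _, this, ha k⟩
    · intro k _ k' _ h
      exact congrArg Sigma.fst h
  have hsum : ∑ l, (Finset.univ.filter fun k => (a k).1 = l).card = ∑ l, n l := by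
    rw [← Finset.card_eq_sum_card_fiberwise (f := fun k => (a k).1) (s := Finset.univ)
      (t := Finset.univ) (by intro _ _; simp)]
    simp
  have hEq : ∀ l, (Finset.univ.filter fun k => (a k).1 = l).card = n l := by
    intro l
    exact (Finset.sum_eq_sum_iff_of_le (fun l _ => (hF l).trans (hS l))).1 hsum l
      (Finset.mem_univ l)
  refine ⟨a, fun k p => ⟨fun h => ?_, fun h => h ▸ ha k⟩, hEq⟩
  -- the image of the fibre is everything
  have himg : (Finset.univ.filter fun k => (a k).1 = p.1).image
      (fun k => (⟨k, a k⟩ : Fac d)) = S p.1 := by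
    apply Finset.eq_of_subset_of_card_le
    · intro q hq
      obtain ⟨k', hk', rfl⟩ := Finset.mem_image.1 hq
      exact Finset.mem_filter.2 ⟨Finset.mem_univ _, (Finset.mem_filter.1 hk').2, ha k'⟩
    · rw [Finset.card_image_of_injective, hEq]
      · exact hS _
      · intro k k' h
        exact congrArg Sigma.fst h
  have hmem : (⟨k, p⟩ : Fac d) ∈ S p.1 :=
    Finset.mem_filter.2 ⟨Finset.mem_univ _, rfl, h⟩
  rw [← himg] at hmem
  obtain ⟨k', _, hk'⟩ := Finset.mem_image.1 hmem
  obtain rfl : k' = k := congrArg Sigma.fst hk'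
  simpa using hk'.symm

theorem zeros_x0 (x : Vr n → ℂ) (hx : ∀ l, ∃ i, x ⟨l, i⟩ ≠ 0)
    (hz : ∀ k, eval x (Hp d ℂ k) = 0) (l : ι) : x ⟨l, 0⟩ ≠ 0 := by
  classical
  obtain ⟨a, h1, h2⟩ := zeros_struct d x hx hz
  intro h0
  have := block_zero0 d (fun i => x ⟨l, i⟩) h0 a
    (Finset.univ.filter fun k => (a k).1 = l) (h2 l).ge (by
      intro k hk
      have hk : (a k).1 = l := by simpa using hk
      have := (h1 k (a k)).2 rfl
      rw [eval_Lf] at this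
      subst hk
      exact this)
  obtain ⟨i, hi⟩ := hx l
  exact hi (congrFun this i)

end
end BUP
end

section
open Filter Topology MvPolynomial

namespace BUP
set_option linter.unusedSectionVars false
section
variable {ι : Type} [Fintype ι] [DecidableEq ι] {n : ι → ℕ} (d : Ta n → ι → ℕ)

theorem zeros_nondeg (x : Vr n → ℂ) (hx : ∀ l, ∃ i, x ⟨l, i⟩ ≠ 0)
    (hz : ∀ k, eval x (Hp d ℂ k) = 0) :
    (Matrix.of fun k b : Ta n =>
      eval x (X ⟨b.1, 0⟩ * pderiv ⟨b.1, b.2.succ⟩ (Hp d ℂ k))).det ≠ 0 := by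
  classical
  obtain ⟨a, h1, h2⟩ := zeros_struct d x hx hz
  have hx0 := zeros_x0 d x hx hz
  intro hdet
  obtain ⟨v, hv, hM⟩ := Matrix.exists_mulVec_eq_zero_iff.2 hdet
  apply hv
  -- the derivative of `Hp` at `x`
  have hfac : ∀ k, ∃ r : ℂ, r ≠ 0 ∧ ∀ b, eval x (pderiv b (Hp d ℂ k)) =
      r * eval x (pderiv b (Lf n ℂ (cc d ⟨k, a k⟩) (a k).1)) := by
    intro k
    refine ⟨eval x (∏ p ∈ Finset.univ.erase (a k), Lf n ℂ (cc d ⟨k, p⟩) p.1), ?_, fun b => ?_⟩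
    · rw [map_prod, Finset.prod_ne_zero_iff]
      intro p hp h
      exact (Finset.mem_erase.1 hp).1 ((h1 k p).1 h)
    · rw [Hp, ← Finset.mul_prod_erase Finset.univ _ (Finset.mem_univ (a k)), pderiv_mul, map_add,
        map_mul, map_mul, (h1 k (a k)).2 rfl]
      ring
  have hL : ∀ (r : ℕ) (l l' : ι) (i : Fin (n l' + 1)), eval x (pderiv ⟨l', i⟩ (Lf n ℂ r l)) =
      if l' = l then (r : ℂ) ^ (i : ℕ) else 0 := by
    intro r l l' i
    rw [Lf, map_sum, map_sum]
    simp only [pderiv_C_mul, pderiv_X, map_mul, eval_C]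
    split_ifs with h
    · subst h
      rw [Finset.sum_eq_single i]
      · simp
      · intro b _ hb
        rw [Pi.single_apply, if_neg]
        · simp
        · simp [hb]
      · simp
    · apply Finset.sum_eq_zero
      intro b _
      rw [Pi.single_apply, if_neg]
      · simp
      · intro h'; exact h (congrArg Sigma.fst h').symm
  have hrow : ∀ k, ∑ i : Fin (n (a k).1),
      (cc d ⟨k, a k⟩ : ℂ) ^ ((i : ℕ) + 1) * v ⟨(a k).1, i⟩ = 0 := by
    intro k
    obtain ⟨r, hr, hb⟩ := hfac k
    have := congrFun hM k
    simp only [Matrix.mulVec, dotProduct, Matrix.of_apply, Pi.zero_apply, map_mul, eval_X, hb,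
      hL] at this
    rw [Fintype.sum_sigma, Finset.sum_eq_single (a k).1] at this
    · have e : ∑ i : Fin (n (a k).1), x ⟨(a k).1, 0⟩ * (r * (if (a k).1 = (a k).1 then
          (cc d ⟨k, a k⟩ : ℂ) ^ ((i.succ : Fin _) : ℕ) else 0)) * v ⟨(a k).1, i⟩ =
          (x ⟨(a k).1, 0⟩ * r) * ∑ i : Fin (n (a k).1),
            (cc d ⟨k, a k⟩ : ℂ) ^ ((i : ℕ) + 1) * v ⟨(a k).1, i⟩ := by
        rw [Finset.mul_sum]
        refine Finset.sum_congr rfl fun i _ => ?_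
        simp only [if_true, Fin.val_succ]
        ring
      rw [e] at this
      exact (mul_eq_zero.1 this).resolve_left (mul_ne_zero (hx0 _) hr)
    · intro l _ hl
      apply Finset.sum_eq_zero
      intro i _
      simp [hl]
    · simp
  ext ⟨l, i⟩
  have := block_zero0 d (Fin.cons 0 (fun i => v ⟨l, i⟩) : Fin (n l + 1) → ℂ) (by simp) a
    (Finset.univ.filter fun k => (a k).1 = l) (h2 l).ge (by
      intro k hk
      have hk : (a k).1 = l := by simpa using hk
      subst hk
      rw [Fin.sum_univ_succ]
      simpa using hrow k)
  simpa using congrFun this i.succ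

/-- homogeneous coordinates of an affine point -/
def hm (z : Ta n → ℂ) : Vr n → ℂ := fun a => (Fin.cons 1 (fun i => z ⟨a.1, i⟩) : Fin (n a.1 + 1) → ℂ) a.2

theorem hm_zero (z : Ta n → ℂ) (l : ι) : hm z ⟨l, 0⟩ = 1 := by simp [hm]
theorem hm_succ (z : Ta n → ℂ) (l : ι) (i : Fin (n l)) : hm z ⟨l, i.succ⟩ = z ⟨l, i⟩ := by
  simp [hm]
theorem hm_ne (z : Ta n → ℂ) : ∀ l, ∃ i, hm z ⟨l, i⟩ ≠ 0 := fun l => ⟨0, by rw [hm_zero]; simp⟩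

theorem count_zeros : {z : Ta n → ℂ | ∀ k, eval (hm z) (Hp d ℂ k) = 0}.ncard =
    Nat.card {a : (∀ k, Σ l, Fin (d k l)) //
      ∀ l, (Finset.univ.filter fun k => (a k).1 = l).card = n l} := by
  classical
  rw [← Nat.card_coe_set_eq]
  have hch : ∀ z : {z : Ta n → ℂ | ∀ k, eval (hm z) (Hp d ℂ k) = 0}, _ :=
    fun z => zeros_struct d (hm z.1) (hm_ne z.1) z.2
  choose A hA1 hA2 using hch
  refine Nat.card_congr (Equiv.ofBijective (fun z => ⟨A z, hA2 z⟩) ⟨?_, ?_⟩)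
  · intro z w hzw
    have hzw : A z = A w := congrArg Subtype.val hzw
    apply Subtype.ext
    ext ⟨l, i⟩
    have := block_zero0 d (fun i => hm z.1 ⟨l, i⟩ - hm w.1 ⟨l, i⟩) (by simp [hm_zero]) (A z)
      (Finset.univ.filter fun k => (A z k).1 = l) (hA2 z l).ge (by
        intro k hk
        have hk : (A z k).1 = l := by simpa using hk
        have e1 := (hA1 z k (A z k)).2 rfl
        have e2 := (hA1 w k (A z k)).2 (by rw [hzw])
        rw [eval_Lf] at e1 e2
        subst hk
        simp only [mul_sub, Finset.sum_sub_distrib]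
        rw [e1, e2, sub_zero])
    have := congrFun this i.succ
    simp only [hm_succ, Pi.zero_apply] at this
    exact sub_eq_zero.1 this
  · rintro ⟨a, ha⟩
    let P : ι → Polynomial ℂ := fun l =>
      ∏ k ∈ Finset.univ.filter (fun k => (a k).1 = l),
        (1 - Polynomial.C ((cc d ⟨k, a k⟩ : ℂ)⁻¹) * Polynomial.X)
    have hPd : ∀ l, (P l).natDegree < n l + 1 := by
      intro l
      refine Nat.lt_succ_of_le ((Polynomial.natDegree_prod_le _ _).trans ?_)
      rw [← ha l, Finset.card_eq_sum_ones]
      refine Finset.sum_le_sum fun k _ => ?_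
      refine (Polynomial.natDegree_sub_le _ _).trans ?_
      simp only [Polynomial.natDegree_one, zero_le, sup_of_le_right]
      exact (Polynomial.natDegree_C_mul_le _ _).trans Polynomial.natDegree_X_le
    have hP0 : ∀ l, (P l).coeff 0 = 1 := by
      intro l
      rw [Polynomial.coeff_zero_eq_eval_zero, Polynomial.eval_prod]
      simp
    have hPr : ∀ k, (P (a k).1).eval (cc d ⟨k, a k⟩ : ℂ) = 0 := by
      intro k
      rw [Polynomial.eval_prod]
      apply Finset.prod_eq_zero (i := k) (by simp)
      have : (cc d ⟨k, a k⟩ : ℂ) ≠ 0 := by exact_mod_cast cc_pos d _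
      simp [this]
    let z : Ta n → ℂ := fun b => (P b.1).coeff (b.2 + 1)
    have hz : ∀ l i, hm z ⟨l, i⟩ = (P l).coeff i := by
      intro l i
      refine Fin.cases ?_ (fun i => ?_) i
      · rw [hm_zero, Fin.val_zero, hP0]
      · rw [hm_succ]; simp [z]
    have hLz : ∀ k, eval (hm z) (Lf n ℂ (cc d ⟨k, a k⟩) (a k).1) = 0 := by
      intro k
      rw [eval_Lf, ← hPr k, Polynomial.eval_eq_sum_range' (hPd _), Finset.sum_range]
      refine Finset.sum_congr rfl fun i _ => ?_
      rw [hz, mul_comm]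
    have hzz : ∀ k, eval (hm z) (Hp d ℂ k) = 0 := by
      intro k
      rw [Hp, map_prod]
      exact Finset.prod_eq_zero (Finset.mem_univ (a k)) (hLz k)
    refine ⟨⟨z, hzz⟩, ?_⟩
    apply Subtype.ext
    ext1 k
    exact ((hA1 ⟨z, hzz⟩ k (a k)).1 (hLz k)).symm

end
end BUP
end

section
open Filter Topology MvPolynomial

namespace BUP
set_option linter.unusedSectionVars false
section
variable {ι : Type} [Fintype ι] [DecidableEq ι] {n : ι → ℕ} (d : Ta n → ι → ℕ)

theorem eval_scale {R : Type*} [CommRing R] (p : MvPolynomial (Vr n) R) (e : ι → ℕ)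
    (hp : IsWeightedHomogeneous (wt n) p e) (c : ι → R) (x : Vr n → R) :
    eval (fun a => c a.1 * x a) p = (∏ l, c l ^ e l) * eval x p := by
  rw [eval_eq', eval_eq', Finset.mul_sum]
  refine Finset.sum_congr rfl fun m hm => ?_
  have := hp (mem_support_iff.1 hm)
  have h2 : ∏ l, c l ^ e l = ∏ a : Vr n, c a.1 ^ m a := by
    rw [Fintype.prod_sigma]
    refine Finset.prod_congr rfl fun l _ => ?_
    rw [← this, weight_wt]
    exact (Finset.prod_pow_eq_pow_sum _ _ _).symm
  rw [h2]
  simp only [mul_pow, Finset.prod_mul_distrib]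
  ring

theorem map_hom {R S : Type*} [CommRing R] [CommRing S] (f : R →+* S)
    (p : MvPolynomial (Vr n) R) (e : ι → ℕ)
    (hp : IsWeightedHomogeneous (wt n) p e) : IsWeightedHomogeneous (wt n) (map f p) e := by
  intro m hm
  apply hp
  intro h
  apply hm
  rw [coeff_map, h, map_zero]

theorem Xpd_hom {R : Type*} [CommRing R]
    (p : MvPolynomial (Vr n) R) (e : ι → ℕ)
    (hp : IsWeightedHomogeneous (wt n) p e) (l : ι) (i j) :
    IsWeightedHomogeneous (wt n) (X ⟨l, i⟩ * pderiv ⟨l, j⟩ p) e := by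
  by_cases h : e l = 0
  · rw [pderiv_eq_zero_of_notMem_vars, mul_zero]
    · exact isWeightedHomogeneous_zero _ _ _
    · rw [mem_vars_iff_mem_support]
      rintro ⟨m, hm, h2⟩
      have h3 := congrFun (hp (mem_support_iff.1 hm)) l
      rw [weight_wt, h, Finset.sum_eq_zero_iff] at h3
      exact (Finsupp.mem_support_iff.1 h2) (h3 j (Finset.mem_univ _))
  · have h1 : (e - Pi.single l 1) + Pi.single l 1 = e := by
      ext l'
      by_cases hl : l' = l
      · subst hl; simp; omega
      · simp [hl]
    have h2 := IsWeightedHomogeneous.pderiv (i := (⟨l, j⟩ : Vr n)) hp h1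
    have h3 := (isWeightedHomogeneous_X R (wt n) (⟨l, i⟩ : Vr n)).mul h2
    have h4 : wt n ⟨l, i⟩ + (e - Pi.single l 1) = e := by rw [add_comm]; exact h1
    rwa [h4] at h3

/-- deformation -/
noncomputable def Pt {R : Type*} [CommRing R] (F : Ta n → MvPolynomial (Vr n) R) (t : R)
    (k : Ta n) : MvPolynomial (Vr n) R := Hp d R k + C t * (F k - Hp d R k)

theorem map_Pt {R S : Type*} [CommRing R] [CommRing S] (f : R →+* S)
    (F : Ta n → MvPolynomial (Vr n) R) (t : R) (k : Ta n) :
    map f (Pt d F t k) = Pt d (fun k => map f (F k)) (f t) k := by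
  simp [Pt, map_Hp]

theorem Pt_hom {R : Type*} [CommRing R] (F : Ta n → MvPolynomial (Vr n) R)
    (hF : ∀ k, IsWeightedHomogeneous (wt n) (F k) (d k)) (t : R) (k : Ta n) :
    IsWeightedHomogeneous (wt n) (Pt d F t k) (d k) := by
  refine IsWeightedHomogeneous.add (Hp_hom d R k) (IsWeightedHomogeneous.C_mul ?_ _)
  rw [sub_eq_add_neg, ← neg_one_mul, ← C_1, ← C_neg]
  exact IsWeightedHomogeneous.add (hF k) (IsWeightedHomogeneous.C_mul (Hp_hom d R k) _)

/-- Jacobian -/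
noncomputable def Jd {R : Type*} [CommRing R] (F : Ta n → MvPolynomial (Vr n) R) :
    MvPolynomial (Vr n) R :=
  (Matrix.of fun k b : Ta n => X ⟨b.1, 0⟩ * pderiv ⟨b.1, b.2.succ⟩ (F k)).det

theorem map_Jd {R S : Type*} [CommRing R] [CommRing S] (f : R →+* S)
    (F : Ta n → MvPolynomial (Vr n) R) :
    map f (Jd F) = Jd fun k => map f (F k) := by
  rw [Jd, RingHom.map_det, Jd]
  congr 1
  ext k b : 2
  simp [pderiv_map]

theorem eval_Jd {R : Type*} [CommRing R] (F : Ta n → MvPolynomial (Vr n) R) (x : Vr n → R) :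
    eval x (Jd F) = (Matrix.of fun k b : Ta n =>
      eval x (X ⟨b.1, 0⟩ * pderiv ⟨b.1, b.2.succ⟩ (F k))).det := by
  rw [Jd, RingHom.map_det]
  congr 1

theorem Jd_hom {R : Type*} [CommRing R] (F : Ta n → MvPolynomial (Vr n) R)
    (hF : ∀ k, IsWeightedHomogeneous (wt n) (F k) (d k)) :
    IsWeightedHomogeneous (wt n) (Jd F) (∑ k, d k) := by
  rw [Jd, Matrix.det_apply]
  refine IsWeightedHomogeneous.sum _ _ _ fun σ _ => ?_
  have h : IsWeightedHomogeneous (wt n) (∏ i, (Matrix.of fun k b : Ta n =>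
      X ⟨b.1, 0⟩ * pderiv ⟨b.1, b.2.succ⟩ (F k)) (σ i) i) (∑ i, d (σ i)) :=
    IsWeightedHomogeneous.prod _ _ _ fun i _ => Xpd_hom _ _ (hF _) _ _ _
  rw [Equiv.sum_comp σ d] at h
  rcases Int.units_eq_one_or (Equiv.Perm.sign σ) with h1 | h1
  · rw [h1, one_smul]; exact h
  · rw [h1, Units.neg_smul, one_smul, ← neg_one_mul, ← C_1, ← C_neg]
    exact h.C_mul _

theorem bad_set (F : Ta n → MvPolynomial (Vr n) ℂ)
    (hF : ∀ k, IsWeightedHomogeneous (wt n) (F k) (d k)) :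
    ∃ B : Set ℂ, B.Finite ∧ 0 ∉ B ∧ ∀ t ∉ B, ∀ x : Vr n → ℂ, (∀ l, ∃ i, x ⟨l, i⟩ ≠ 0) →
      (∀ k, eval x (Pt d F t k) = 0) → eval x (Jd (Pt d F t)) ≠ 0 := by
  let Q : Ta n → MvPolynomial (Vr n) (Polynomial ℂ) :=
    Pt d (fun k => map Polynomial.C (F k)) Polynomial.X
  have hQ : ∀ k, IsWeightedHomogeneous (wt n) (Q k) (d k) :=
    Pt_hom d _ (fun k => map_hom _ _ _ (hF k)) _
  have hev : ∀ t k, map (Polynomial.evalRingHom t) (Q k) = Pt d F t k := by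
    intro t k
    have e : (Polynomial.evalRingHom t).comp Polynomial.C = RingHom.id ℂ := by
      ext <;> simp
    rw [map_Pt]
    simp [MvPolynomial.map_map, e, MvPolynomial.map_id]
  obtain ⟨B, hB, h0, h⟩ := elim n (κ := Option (Ta n))
    (fun q => q.elim (Jd Q) Q) (fun q => q.elim (∑ k, d k) d)
    (by rintro (_ | k)
        · exact Jd_hom d Q hQ
        · exact hQ k) 0 (by
      intro x hx
      by_contra! hc
      have h1 : ∀ k, eval x (Hp d ℂ k) = 0 := by
        intro k
        have := hc (some k)
        simpa [hev, Pt] using this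
      have h2 := hc none
      simp only [Option.elim_none, map_Jd, hev] at h2
      have h3 : Pt d F 0 = Hp d ℂ := by ext1 k; simp [Pt]
      rw [h3, eval_Jd] at h2
      exact zeros_nondeg d x hx h1 h2)
  refine ⟨B, hB, h0, fun t ht x hx hz => ?_⟩
  obtain ⟨q, hq⟩ := h t ht x hx
  rcases q with _ | k
  · simpa only [Option.elim_none, map_Jd, hev] using hq
  · simp only [Option.elim_some, hev] at hq
    exact absurd (hz k) hq

theorem x0_ne (F : Ta n → MvPolynomial (Vr n) ℂ) (x : Vr n → ℂ) (hn : ∀ l, 1 ≤ n l)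
    (h : eval x (Jd F) ≠ 0) (l : ι) : x ⟨l, 0⟩ ≠ 0 := by
  intro h0
  apply h
  rw [eval_Jd]
  apply Matrix.det_eq_zero_of_column_eq_zero ⟨l, ⟨0, hn l⟩⟩
  intro k
  simp [h0]

theorem hm_contDiff : ContDiff ℂ 1 (hm : (Ta n → ℂ) → (Vr n → ℂ)) := by
  rw [contDiff_pi]
  rintro ⟨l, i⟩
  refine Fin.cases ?_ (fun i => ?_) i
  · simp only [hm_zero]; exact contDiff_const
  · simp only [hm_succ]; exact contDiff_apply ℂ ℂ (⟨l, i⟩ : Ta n)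

theorem eval_contDiff {σ : Type*} [Fintype σ] (p : MvPolynomial σ ℂ) :
    ContDiff ℂ 1 (fun x => eval x p) := by
  simp only [eval_eq']
  refine ContDiff.sum fun m _ => contDiff_const.mul (contDiff_prod fun i _ => ?_)
  exact (contDiff_apply ℂ ℂ i).pow _

theorem hm_deriv (p : MvPolynomial (Vr n) ℂ) (z : Ta n → ℂ) :
    HasFDerivAt (fun z => eval (hm z) p)
      (∑ b : Ta n, eval (hm z) (pderiv ⟨b.1, b.2.succ⟩ p) •
        (ContinuousLinearMap.proj b : (Ta n → ℂ) →L[ℂ] ℂ)) z := by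
  have h1 : HasFDerivAt (hm : (Ta n → ℂ) → (Vr n → ℂ))
      (ContinuousLinearMap.pi fun a : Vr n =>
        (Fin.cons 0 (fun i => ContinuousLinearMap.proj ⟨a.1, i⟩) :
          Fin (n a.1 + 1) → ((Ta n → ℂ) →L[ℂ] ℂ)) a.2) z := by
    rw [hasFDerivAt_pi]
    rintro ⟨l, i⟩
    refine Fin.cases ?_ (fun i => ?_) i
    · simp only [hm_zero, Fin.cons_zero]; exact hasFDerivAt_const _ _
    · simp only [hm_succ, Fin.cons_succ]; exact hasFDerivAt_apply _ _
  have h2 := (mv_strict p (hm z)).hasFDerivAt.comp z h1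
  refine h2.congr_fderiv ?_
  ext v
  simp only [ContinuousLinearMap.comp_apply, _root_.sum_apply,
    _root_.smul_apply, ContinuousLinearMap.proj_apply, ContinuousLinearMap.pi_apply]
  rw [Fintype.sum_sigma, Fintype.sum_sigma]
  refine Finset.sum_congr rfl fun l _ => ?_
  rw [Fin.sum_univ_succ]
  simp

end
end BUP
end

section
open Filter Topology MvPolynomial

namespace BUP
set_option linter.unusedSectionVars false
section
variable {ι : Type} [Fintype ι] [DecidableEq ι] {n : ι → ℕ} (d : Ta n → ι → ℕ)

/-- product of sup-norm spheres -/
def Sp (n : ι → ℕ) (𝕜 : Type) [NormedField 𝕜] : Set (Vr n → 𝕜) :=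
  {x | ∀ l, ‖fun i : Fin (n l + 1) => x ⟨l, i⟩‖ = 1}

theorem Sp_compact (𝕜 : Type) [NormedField 𝕜] [ProperSpace 𝕜] : IsCompact (Sp n 𝕜) := by
  apply Metric.isCompact_of_isClosed_isBounded
  · rw [Sp, Set.ofPred_forall]
    refine isClosed_iInter fun l => isClosed_eq ?_ continuous_const
    fun_prop
  · refine (Metric.isBounded_closedBall (x := 0) (r := 1)).subset fun x hx => ?_
    rw [mem_closedBall_zero_iff, pi_norm_le_iff_of_nonneg zero_le_one]
    rintro ⟨l, i⟩
    rw [← hx l]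
    exact norm_le_pi_norm (fun i : Fin (n l + 1) => x ⟨l, i⟩) i

theorem Sp_ne {𝕜 : Type} [NormedField 𝕜] {x : Vr n → 𝕜} (hx : x ∈ Sp n 𝕜) :
    ∀ l, ∃ i, x ⟨l, i⟩ ≠ 0 := by
  intro l
  by_contra! h
  have := hx l
  have e : (fun i : Fin (n l + 1) => x ⟨l, i⟩) = 0 := funext h
  rw [e] at this
  simp at this

theorem Sp_scale {𝕜 : Type} [RCLike 𝕜] (x : Vr n → 𝕜) (hx : ∀ l, ∃ i, x ⟨l, i⟩ ≠ 0) :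
    ∃ c : ι → 𝕜, (∀ l, c l ≠ 0) ∧ (fun a => c a.1 * x a) ∈ Sp n 𝕜 := by
  have h0 : ∀ l, ‖fun i : Fin (n l + 1) => x ⟨l, i⟩‖ ≠ 0 := by
    intro l h
    obtain ⟨i, hi⟩ := hx l
    exact hi (congrFun (norm_eq_zero.1 h) i)
  refine ⟨fun l => ((‖fun i : Fin (n l + 1) => x ⟨l, i⟩‖⁻¹ : ℝ) : 𝕜), fun l => ?_, fun l => ?_⟩
  · simpa using h0 l
  · have : (fun i : Fin (n l + 1) => ((‖fun i : Fin (n l + 1) => x ⟨l, i⟩‖⁻¹ : ℝ) : 𝕜) * x ⟨l, i⟩)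
        = ((‖fun i : Fin (n l + 1) => x ⟨l, i⟩‖⁻¹ : ℝ) : 𝕜) • (fun i : Fin (n l + 1) => x ⟨l, i⟩) := by
      ext i; simp
    rw [this, norm_smul, RCLike.norm_ofReal, abs_of_nonneg (by positivity), inv_mul_cancel₀ (h0 l)]

theorem Pt_eval {R : Type*} [CommRing R] (F : Ta n → MvPolynomial (Vr n) R) (t : R) (k : Ta n) (x) :
    eval x (Pt d F t k) = eval x (Hp d R k) + t * (eval x (F k) - eval x (Hp d R k)) := by
  simp [Pt]

theorem chart_inv (G : Ta n → MvPolynomial (Vr n) ℂ) (z : Ta n → ℂ)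
    (hJ : eval (hm z) (Jd G) ≠ 0) :
    ∃ L : (Ta n → ℂ) →L[ℂ] (Ta n → ℂ),
      HasFDerivAt (fun z k => eval (hm z) (G k)) L z ∧ L.IsInvertible := by
  classical
  rw [eval_Jd] at hJ
  simp only [map_mul, eval_X, hm_zero, one_mul] at hJ
  set M := (Matrix.of fun k b : Ta n => eval (hm z) (pderiv ⟨b.1, b.2.succ⟩ (G k)))
  refine ⟨_, hasFDerivAt_pi.2 fun k => hm_deriv (G k) z,
    (Matrix.toLinearEquiv' M (M.invertibleOfIsUnitDet
      (isUnit_iff_ne_zero.2 hJ))).toContinuousLinearEquiv, ?_⟩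
  ext1 v
  ext k
  simp only [ContinuousLinearMap.pi_apply, _root_.sum_apply, _root_.smul_apply,
    ContinuousLinearMap.proj_apply, smul_eq_mul]
  rfl

theorem count (hn : ∀ l, 1 ≤ n l) (F : Ta n → MvPolynomial (Vr n) ℂ)
    (hF : ∀ k, IsWeightedHomogeneous (wt n) (F k) (d k)) :
    ∃ B : Set ℂ, B.Finite ∧ ∀ t ∉ B, {z : Ta n → ℂ | ∀ k, eval (hm z) (Pt d F t k) = 0}.Finite ∧
      {z : Ta n → ℂ | ∀ k, eval (hm z) (Pt d F t k) = 0}.ncard =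
      Nat.card {a : (∀ k, Σ l, Fin (d k l)) //
        ∀ l, (Finset.univ.filter fun k => (a k).1 = l).card = n l} := by
  classical
  obtain ⟨B, hB, h0, h⟩ := bad_set d F hF
  refine ⟨B, hB, fun t ht => ?_⟩
  let Φ : ℂ × (Ta n → ℂ) → (Ta n → ℂ) := fun q k => eval (hm q.2) (Pt d F q.1 k)
  have hΦ : ContDiff ℂ 1 Φ := by
    rw [contDiff_pi]
    intro k
    simp only [Φ, Pt_eval]
    have h1 : ∀ p : MvPolynomial (Vr n) ℂ,
        ContDiff ℂ 1 (fun q : ℂ × (Ta n → ℂ) => eval (hm q.2) p) := fun p =>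
      (eval_contDiff p).comp (hm_contDiff.comp contDiff_snd)
    exact (h1 _).add (contDiff_fst.mul ((h1 _).sub (h1 _)))
  have key := const_count Φ hΦ.continuous Bᶜ
    (hB.countable.isPathConnected_compl_of_one_lt_rank (by simp)).isConnected.isPreconnected
    ?_ ?_ 0 t h0 ht
  · have e : ∀ t, {z | Φ (t, z) = 0} = {z : Ta n → ℂ | ∀ k, eval (hm z) (Pt d F t k) = 0} := by
      intro t; ext z; simp only [Set.mem_ofPred_eq, funext_iff]; rfl
    rw [e, e] at key
    refine ⟨key.1, ?_⟩
    rw [← key.2, ← count_zeros]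
    congr 1; ext z; simp [Pt]
  · intro t ht z hz
    have hz' : ∀ k, eval (hm z) (Pt d F t k) = 0 := fun k => congrFun hz k
    have hs : HasStrictFDerivAt Φ (fderiv ℂ Φ (t, z)) (t, z) :=
      hΦ.contDiffAt.hasStrictFDerivAt one_ne_zero
    refine ⟨_, hs, ?_⟩
    have hJ := h t ht (hm z) (hm_ne z) hz'
    have hz1 : HasFDerivAt (fun z => Φ (t, z)) (fderiv ℂ Φ (t, z) ∘L .inr ℂ ℂ (Ta n → ℂ)) z :=
      hs.hasFDerivAt.comp z (hasFDerivAt_prodMk_right t z)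
    obtain ⟨L, hz2, hL⟩ := chart_inv _ z hJ
    have hu := hz1.unique hz2
    rw [hu]
    exact hL
  · intro t0 ht0
    obtain ⟨r, hr, hrB⟩ := Metric.nhds_basis_closedBall.mem_iff.1
      (hB.isClosed.isOpen_compl.mem_nhds ht0)
    let W : Set (ℂ × (Vr n → ℂ)) := (Metric.closedBall t0 r ×ˢ Sp n ℂ) ∩
      {q | ∀ k, eval q.2 (Pt d F q.1 k) = 0}
    have hW : IsCompact W := by
      refine ((isCompact_closedBall t0 r).prod (Sp_compact ℂ)).inter_right ?_
      rw [Set.ofPred_forall]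
      refine isClosed_iInter fun k => isClosed_eq ?_ continuous_const
      simp only [Pt_eval]
      have h1 : ∀ p : MvPolynomial (Vr n) ℂ,
          Continuous (fun q : ℂ × (Vr n → ℂ) => eval q.2 p) := fun p =>
        (eval_contDiff p).continuous.comp continuous_snd
      exact (h1 _).add (continuous_fst.mul ((h1 _).sub (h1 _)))
    refine ⟨(fun q : ℂ × (Vr n → ℂ) => fun b : Ta n => q.2 ⟨b.1, b.2.succ⟩ / q.2 ⟨b.1, 0⟩) '' W,
      hW.image_of_continuousOn ?_, ?_⟩
    · refine continuousOn_pi.2 fun b => ContinuousOn.div (by fun_prop) (by fun_prop) ?_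
      rintro ⟨t, x⟩ ⟨⟨h1, h2⟩, h3⟩
      exact x0_ne _ x hn (h t (hrB h1) x (Sp_ne h2) h3) _
    · filter_upwards [Metric.closedBall_mem_nhds t0 hr] with t ht z hz
      have hz' : ∀ k, eval (hm z) (Pt d F t k) = 0 := fun k => congrFun hz k
      obtain ⟨c, hc, hs⟩ := Sp_scale (hm z) (hm_ne z)
      refine ⟨(t, fun a => c a.1 * hm z a), ⟨⟨ht, hs⟩, fun k => ?_⟩, ?_⟩
      · show eval (fun a : Vr n => c a.1 * hm z a) (Pt d F t k) = 0
        rw [eval_scale _ (d k) (Pt_hom d F hF t k), hz', mul_zero]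
      · ext ⟨l, i⟩
        simp [hm_zero, hm_succ, hc l]

theorem odd_real (hn : ∀ l, 1 ≤ n l) (F : Ta n → MvPolynomial (Vr n) ℝ)
    (hF : ∀ k, IsWeightedHomogeneous (wt n) (F k) (d k))
    (hodd : Odd (Nat.card {a : (∀ k, Σ l, Fin (d k l)) //
        ∀ l, (Finset.univ.filter fun k => (a k).1 = l).card = n l})) :
    ∃ B : Set ℂ, B.Finite ∧ ∀ t : ℝ, (t : ℂ) ∉ B → ∃ x : Vr n → ℝ, (∀ l, ∃ i, x ⟨l, i⟩ ≠ 0) ∧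
      ∀ k, eval x (Pt d F t k) = 0 := by
  classical
  obtain ⟨B, hB, h⟩ := count d hn (fun k => map Complex.ofRealHom (F k))
    (fun k => map_hom _ _ _ (hF k))
  refine ⟨B, hB, fun t ht => ?_⟩
  obtain ⟨hfin, hcard⟩ := h t ht
  set S := {z : Ta n → ℂ | ∀ k, eval (hm z) (Pt d (fun k => map Complex.ofRealHom (F k)) t k) = 0}
    with hS
  have hP : ∀ k, Pt d (fun k => map Complex.ofRealHom (F k)) (t : ℂ) k =
      map Complex.ofRealHom (Pt d F t k) := fun k => (map_Pt d Complex.ofRealHom F t k).symm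
  have hconj : ∀ z ∈ S, (fun b => starRingEnd ℂ (z b)) ∈ S := by
    intro z hz k
    have h1 := hz k
    rw [hP, eval_map] at h1 ⊢
    have h2 := congrArg (starRingEnd ℂ) h1
    rw [map_zero, eval₂_comp_left] at h2
    rw [← h2]
    have e1 : (starRingEnd ℂ).comp Complex.ofRealHom = Complex.ofRealHom := by
      ext <;> simp
    rw [e1]
    congr 1
    ext ⟨l, i⟩
    refine Fin.cases ?_ (fun i => ?_) i
    · simp [hm_zero]
    · simp [hm_succ]
  have : Fintype S := hfin.fintype
  let σ : Function.End S := fun z => ⟨_, hconj z.1 z.2⟩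
  have hσ : σ ^ 2 ^ 1 = 1 := by
    rw [pow_one, pow_two]
    funext z
    apply Subtype.ext
    ext b
    exact Complex.conj_conj _
  have hmod := Equiv.Perm.card_fixedPoints_modEq (p := 2) hσ
  have hne : Nonempty (Function.fixedPoints σ) := by
    by_contra hne
    rw [not_nonempty_iff] at hne
    rw [Fintype.card_eq_zero (α := Function.fixedPoints σ)] at hmod
    rw [← Nat.card_coe_set_eq, Nat.card_eq_fintype_card] at hcard
    rw [← hcard, Nat.odd_iff] at hodd
    rw [Nat.ModEq] at hmod
    omega
  obtain ⟨⟨z, hz⟩⟩ := hne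
  have hzr : ∀ b, ((z.1 b).re : ℂ) = z.1 b := by
    intro b
    have := congrFun (congrArg Subtype.val hz) b
    exact Complex.conj_eq_iff_re.1 this
  let x : Vr n → ℝ := fun a => (hm z.1 a).re
  have hx : (fun a => (x a : ℂ)) = hm z.1 := by
    ext ⟨l, i⟩
    refine Fin.cases ?_ (fun i => ?_) i
    · simp [x, hm_zero]
    · simp only [x, hm_succ]; exact hzr _
  refine ⟨x, fun l => ⟨0, by simp [x, hm_zero]⟩, fun k => ?_⟩
  have h1 := z.2 k
  rw [hP, eval_map, ← hx] at h1
  have h2 := eval₂_comp_left Complex.ofRealHom (RingHom.id ℝ) x (Pt d F t k)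
  have : Complex.ofRealHom (eval x (Pt d F t k)) = 0 := by
    rw [← h1]; exact h2
  simpa using this

theorem core (hn : ∀ l, 1 ≤ n l) (F : Ta n → MvPolynomial (Vr n) ℝ)
    (hF : ∀ k, IsWeightedHomogeneous (wt n) (F k) (d k))
    (hodd : Odd (Nat.card {a : (∀ k, Σ l, Fin (d k l)) //
        ∀ l, (Finset.univ.filter fun k => (a k).1 = l).card = n l})) :
    ∃ x : Vr n → ℝ, (∀ l, ∃ i, x ⟨l, i⟩ ≠ 0) ∧ ∀ k, eval x (F k) = 0 := by
  obtain ⟨B, hB, h⟩ := odd_real d hn F hF hodd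
  let W : Set (ℝ × (Vr n → ℝ)) := (Set.Icc 0 2 ×ˢ Sp n ℝ) ∩ {q | ∀ k, eval q.2 (Pt d F q.1 k) = 0}
  have hW : IsCompact W := by
    refine (isCompact_Icc.prod (Sp_compact ℝ)).inter_right ?_
    rw [Set.ofPred_forall]
    refine isClosed_iInter fun k => isClosed_eq ?_ continuous_const
    simp only [Pt_eval]
    have h1 : ∀ p : MvPolynomial (Vr n) ℝ,
        Continuous (fun q : ℝ × (Vr n → ℝ) => eval q.2 p) := fun p =>
      (MvPolynomial.continuous_eval p).comp continuous_snd
    exact (h1 _).add (continuous_fst.mul ((h1 _).sub (h1 _)))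
  have hA : IsClosed (Prod.fst '' W) := (hW.image continuous_fst).isClosed
  have h1 : (1 : ℝ) ∈ Prod.fst '' W := by
    by_contra hc
    have hfin : ((fun t : ℝ => (t : ℂ)) ⁻¹' B).Finite :=
      hB.preimage Complex.ofReal_injective.injOn
    have hopen : IsOpen ((Prod.fst '' W)ᶜ ∩ Set.Ioo 0 2) := hA.isOpen_compl.inter isOpen_Ioo
    obtain ⟨t, ⟨ht1, ht2⟩, ht3⟩ := (hfin.countable.dense_compl ℝ).inter_open_nonempty _ hopen
      ⟨1, hc, by norm_num⟩
    apply ht1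
    obtain ⟨x, hx, hz⟩ := h t ht3
    obtain ⟨c, hc, hs⟩ := Sp_scale x hx
    refine ⟨(t, fun a => c a.1 * x a), ⟨⟨Set.Ioo_subset_Icc_self ht2, hs⟩, fun k => ?_⟩, rfl⟩
    show eval (fun a : Vr n => c a.1 * x a) (Pt d F t k) = 0
    rw [eval_scale _ (d k) (Pt_hom d F hF t k), hz, mul_zero]
  obtain ⟨⟨t, x⟩, ⟨⟨_, hx⟩, hz⟩, rfl⟩ := h1
  refine ⟨x, Sp_ne hx, fun k => ?_⟩
  have := hz k
  simpa [Pt_eval] using this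

end
end BUP
end

section
open Filter Topology MvPolynomial

namespace BUP
set_option linter.unusedSectionVars false

/-- sign of an element of Z/2 -/
noncomputable def sg (u : ZMod 2) : ℝ := if u = 0 then 1 else -1

theorem sg_add (u v : ZMod 2) : sg (u + v) = sg u * sg v := by
  have h : ∀ u : ZMod 2, u = 0 ∨ u = 1 := by decide
  have h2 : (1 : ZMod 2) + 1 = 0 := by decide
  rcases h u with rfl | rfl <;> rcases h v with rfl | rfl <;> simp [sg, h2]

theorem sg_zero : sg 0 = 1 := by simp [sg]
theorem sg_one : sg 1 = -1 := by simp [sg]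
theorem sg_sq (u) : sg u * sg u = 1 := by rw [sg]; split_ifs <;> simp

theorem sg_pow (u : ZMod 2) (m : ℕ) : sg u ^ m = sg ((m : ZMod 2) * u) := by
  induction m with
  | zero => simp [sg_zero]
  | succ m ih => rw [pow_succ, ih, ← sg_add]; push_cast; ring_nf

section
variable {ι : Type} [Fintype ι] [DecidableEq ι] {n : ι → ℕ}

/-- characters -/
noncomputable def ch (χ g : ι → ZMod 2) : ℝ := ∏ l, sg (χ l * g l)

theorem ch_add_right (χ g h : ι → ZMod 2) : ch χ (g + h) = ch χ g * ch χ h := by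
  simp [ch, mul_add, sg_add, Finset.prod_mul_distrib]

theorem ch_add_left (χ g h : ι → ZMod 2) : ch (χ + g) h = ch χ h * ch g h := by
  simp [ch, add_mul, sg_add, Finset.prod_mul_distrib]

theorem ch_comm (χ g : ι → ZMod 2) : ch χ g = ch g χ := by
  simp [ch, mul_comm]

theorem ch_zero (g : ι → ZMod 2) : ch 0 g = 1 := by simp [ch, sg_zero]

theorem ch_sq (χ g : ι → ZMod 2) : ch χ g * ch χ g = 1 := by
  simp [ch, ← Finset.prod_mul_distrib, sg_sq]

theorem ch_abs (χ g : ι → ZMod 2) : |ch χ g| = 1 := by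
  have := ch_sq χ g
  rcases mul_self_eq_one_iff.1 this with h | h <;> rw [h] <;> simp

theorem ch_sum (χ : ι → ZMod 2) (h : χ ≠ 0) : ∑ g, ch χ g = 0 := by
  have : ∃ l, χ l ≠ 0 := by
    by_contra! hc
    exact h (funext hc)
  obtain ⟨l, hl⟩ := this
  have hl : χ l = 1 := by
    revert hl; generalize χ l = u; revert u; decide
  have h1 : ∑ g, ch χ g = ∑ g, ch χ (Pi.single l 1 + g) :=
    (Equiv.sum_comp (Equiv.addLeft (Pi.single l 1)) (ch χ)).symm
  have h2 : ch χ (Pi.single l 1) = -1 := by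
    rw [ch, Finset.prod_eq_single l]
    · simp [hl, sg_one]
    · intro b _ hb; simp [hb, sg_zero]
    · simp
  simp only [ch_add_right, h2, ← Finset.mul_sum] at h1
  linarith

/-- product of round spheres -/
def Yn (n : ι → ℕ) : Set (Vr n → ℝ) := {x | ∀ l, ∑ i, x ⟨l, i⟩ ^ 2 = 1}

theorem Yn_compact : IsCompact (Yn n) := by
  apply Metric.isCompact_of_isClosed_isBounded
  · rw [Yn, Set.ofPred_forall]
    refine isClosed_iInter fun l => isClosed_eq ?_ continuous_const
    fun_prop
  · refine (Metric.isBounded_closedBall (x := 0) (r := 1)).subset fun x hx => ?_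
    rw [mem_closedBall_zero_iff, pi_norm_le_iff_of_nonneg zero_le_one]
    rintro ⟨l, i⟩
    rw [Real.norm_eq_abs, ← sq_le_one_iff_abs_le_one, ← hx l]
    exact Finset.single_le_sum (f := fun i => x ⟨l, i⟩ ^ 2) (fun _ _ => sq_nonneg _)
      (Finset.mem_univ i)

/-- action -/
noncomputable def ac (g : ι → ZMod 2) (x : Vr n → ℝ) : Vr n → ℝ := fun a => sg (g a.1) * x a

theorem ac_mem (g : ι → ZMod 2) {x : Vr n → ℝ} (hx : x ∈ Yn n) : ac g x ∈ Yn n := by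
  intro l
  rw [← hx l]
  refine Finset.sum_congr rfl fun i _ => ?_
  rw [ac, mul_pow, pow_two (sg _), sg_sq, one_mul]

noncomputable def Qf (n : ι → ℕ) (l : ι) : MvPolynomial (Vr n) ℝ := ∑ i, X ⟨l, i⟩ ^ 2

theorem Qf_hom (l : ι) : IsWeightedHomogeneous (wt n) (Qf n l) (2 • Pi.single l 1) := by
  refine IsWeightedHomogeneous.sum _ _ _ fun i _ => ?_
  exact (isWeightedHomogeneous_X ℝ (wt n) (⟨l, i⟩ : Vr n)).pow 2

theorem Qf_eval (l : ι) (x) (hx : x ∈ Yn n) : eval x (Qf n l) = 1 := by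
  simp only [Qf, map_sum, map_pow, eval_X]
  exact hx l

theorem raise (F : MvPolynomial (Vr n) ℝ) (d D : ι → ℕ) (hF : IsWeightedHomogeneous (wt n) F d)
    (h : ∀ l, ∃ r, D l = d l + 2 * r) :
    ∃ F' : MvPolynomial (Vr n) ℝ, IsWeightedHomogeneous (wt n) F' D ∧
      ∀ x ∈ Yn n, eval x F' = eval x F := by
  choose r hr using h
  refine ⟨F * ∏ l, Qf n l ^ r l, ?_, fun x hx => ?_⟩
  · have h1 := IsWeightedHomogeneous.prod Finset.univ (fun l => Qf n l ^ r l)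
      (fun l => r l • (2 • (Pi.single l 1 : ι → ℕ))) (w := wt n) (fun l _ => (Qf_hom l).pow _)
    have h2 := hF.mul h1
    have h3 : d + ∑ l, r l • (2 • (Pi.single l 1 : ι → ℕ)) = D := by
      ext l
      rw [Pi.add_apply, Finset.sum_apply, Finset.sum_eq_single l, hr]
      · simp; ring
      · intro b _ hb; simp [hb.symm]
      · simp
    rwa [h3] at h2
  · rw [map_mul, map_prod, Finset.prod_eq_one, mul_one]
    intro l _
    rw [map_pow, Qf_eval l x hx, one_pow]

theorem avg (χ : ι → ZMod 2) (P : MvPolynomial (Vr n) ℝ) :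
    ∃ (d : ι → ℕ) (F : MvPolynomial (Vr n) ℝ), (∀ l, (d l : ZMod 2) = χ l) ∧
      IsWeightedHomogeneous (wt n) F d ∧
      ∀ x ∈ Yn n, (Fintype.card (ι → ZMod 2) : ℝ) * eval x F = ∑ g, ch χ g * eval (ac g x) P := by
  induction P using MvPolynomial.induction_on' with
  | monomial m a =>
    have hw : ∀ (g : ι → ZMod 2) (x : Vr n → ℝ), eval (ac g x) (monomial m a) =
        ch (fun l => (Finsupp.weight (wt n) m l : ZMod 2)) g * eval x (monomial m a) := by
      intro g x
      have h1 := eval_scale (monomial m a) (Finsupp.weight (wt n) m)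
        (isWeightedHomogeneous_monomial _ _ _ rfl) (fun l => sg (g l)) x
      rw [show ac g x = fun a => sg (g a.1) * x a from rfl, h1]
      congr 1
      refine Finset.prod_congr rfl fun l _ => sg_pow _ _
    simp only [hw, ← mul_assoc, ← ch_add_left, ← Finset.sum_mul]
    by_cases h : (fun l => (Finsupp.weight (wt n) m l : ZMod 2)) = χ
    · refine ⟨Finsupp.weight (wt n) m, monomial m a, fun l => congrFun h l,
        isWeightedHomogeneous_monomial _ _ _ rfl, fun x _ => ?_⟩
      rw [h]
      have : χ + χ = 0 := by
        funext l; exact CharTwo.add_self_eq_zero (χ l)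
      rw [this]
      simp [ch_zero]
    · refine ⟨fun l => (χ l).val, 0, fun l => by simp, isWeightedHomogeneous_zero _ _ _,
        fun x _ => ?_⟩
      rw [ch_sum]
      · simp
      · intro h0
        apply h
        ext l : 1
        have := congrFun h0 l
        exact (CharTwo.add_eq_zero.1 this).symm
  | add p q hp hq =>
    obtain ⟨d1, F1, h1, h1', h1''⟩ := hp
    obtain ⟨d2, F2, h2, h2', h2''⟩ := hq
    have hpar : ∀ a b : ℕ, (a : ZMod 2) = (b : ZMod 2) → a ≤ b → ∃ r, b = a + 2 * r := by
      intro a b hab hle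
      rw [ZMod.natCast_eq_natCast_iff, Nat.ModEq] at hab
      exact ⟨(b - a) / 2, by omega⟩
    have hD : ∀ l, ((max (d1 l) (d2 l) : ℕ) : ZMod 2) = χ l := by
      intro l
      rcases max_choice (d1 l) (d2 l) with h | h <;> rw [h]
      · exact h1 l
      · exact h2 l
    obtain ⟨G1, hG1, hG1'⟩ := raise F1 d1 (fun l => max (d1 l) (d2 l)) h1'
      fun l => hpar _ _ ((h1 l).trans (hD l).symm) (le_max_left _ _)
    obtain ⟨G2, hG2, hG2'⟩ := raise F2 d2 (fun l => max (d1 l) (d2 l)) h2'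
      fun l => hpar _ _ ((h2 l).trans (hD l).symm) (le_max_right _ _)
    refine ⟨_, G1 + G2, hD, hG1.add hG2, fun x hx => ?_⟩
    simp only [map_add, mul_add, Finset.sum_add_distrib]
    rw [hG1' x hx, hG2' x hx, h1'' x hx, h2'' x hx]

theorem approx_poly (f : Yn n → ℝ) (hf : Continuous f) (ε : ℝ) (hε : 0 < ε) :
    ∃ P : MvPolynomial (Vr n) ℝ, ∀ x : Yn n, |eval x.1 P - f x| < ε := by
  have : CompactSpace (Yn n) := isCompact_iff_compactSpace.1 Yn_compact
  let X' : Vr n → C(Yn n, ℝ) := fun a => ⟨fun x => x.1 a, (continuous_apply a).comp continuous_subtype_val⟩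
  let A : Subalgebra ℝ C(Yn n, ℝ) := (aeval X' : MvPolynomial (Vr n) ℝ →ₐ[ℝ] C(Yn n, ℝ)).range
  have hA : A.SeparatesPoints := by
    intro x y hxy
    obtain ⟨a, ha⟩ : ∃ a, x.1 a ≠ y.1 a := by
      by_contra! hc
      exact hxy (Subtype.ext (funext hc))
    exact ⟨X' a, ⟨X' a, ⟨X a, by simp⟩, rfl⟩, ha⟩
  obtain ⟨⟨g, ⟨P, hP⟩⟩, hg⟩ := ContinuousMap.exists_mem_subalgebra_near_continuous_of_separatesPoints
    A hA f hf ε hε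
  refine ⟨P, fun x => ?_⟩
  have h1 := hg x
  rw [Real.norm_eq_abs] at h1
  have h2 : g x = eval x.1 P := by
    rw [← hP]
    have : (ContinuousMap.evalAlgHom ℝ ℝ x).comp (aeval X') = aeval x.1 := by
      ext a; simp [X']
    have := congrArg (fun φ => φ P) this
    simpa [coe_aeval_eq_eval] using this
  rw [← h2]
  exact h1

theorem approx_hom (χ : ι → ZMod 2) (f : Yn n → ℝ) (hf : Continuous f)
    (hχ : ∀ (g : ι → ZMod 2) (x : Yn n), f ⟨ac g x.1, ac_mem g x.2⟩ = ch χ g * f x)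
    (ε : ℝ) (hε : 0 < ε) :
    ∃ (d : ι → ℕ) (F : MvPolynomial (Vr n) ℝ), (∀ l, (d l : ZMod 2) = χ l) ∧
      IsWeightedHomogeneous (wt n) F d ∧ ∀ x : Yn n, |eval x.1 F - f x| < ε := by
  obtain ⟨P, hP⟩ := approx_poly f hf ε hε
  obtain ⟨d, F, h1, h2, h3⟩ := avg χ P
  refine ⟨d, F, h1, h2, fun x => ?_⟩
  have hN : (0 : ℝ) < (Fintype.card (ι → ZMod 2) : ℝ) := by
    exact_mod_cast Fintype.card_pos
  have e : (Fintype.card (ι → ZMod 2) : ℝ) * (eval x.1 F - f x) =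
      ∑ g, ch χ g * (eval (ac g x.1) P - f ⟨ac g x.1, ac_mem g x.2⟩) := by
    rw [mul_sub, h3 x.1 x.2]
    simp only [mul_sub, Finset.sum_sub_distrib, hχ, ← mul_assoc, ch_sq]
    simp
  have h4 : (Fintype.card (ι → ZMod 2) : ℝ) * |eval x.1 F - f x| <
      (Fintype.card (ι → ZMod 2) : ℝ) * ε := by
    rw [← abs_of_pos hN, ← abs_mul, abs_of_pos hN, e]
    refine (Finset.abs_sum_le_sum_abs _ _).trans_lt ?_
    calc _ < ∑ g : ι → ZMod 2, ε := by
          refine Finset.sum_lt_sum_of_nonempty Finset.univ_nonempty fun g _ => ?_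
          rw [abs_mul, ch_abs, one_mul]
          exact hP ⟨_, ac_mem g x.2⟩
      _ = _ := by simp
  exact lt_of_mul_lt_mul_left h4 hN.le

end

theorem parity {s : ℕ} {n : Fin s → ℕ} (d : Ta n → Fin s → ℕ)
    (h1 : ∀ k, ((d k k.1 : ℕ) : ZMod 2) = 1) (h2 : ∀ k l, k.1 < l → ((d k l : ℕ) : ZMod 2) = 0) :
    Odd (Nat.card {a : (∀ k, Σ l, Fin (d k l)) //
        ∀ l, (Finset.univ.filter fun k => (a k).1 = l).card = n l}) := by
  classical
  let e : {a : (∀ k, Σ l, Fin (d k l)) //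
        ∀ l, (Finset.univ.filter fun k => (a k).1 = l).card = n l} ≃
      Σ u : {u : Ta n → Fin s // ∀ l, (Finset.univ.filter fun k => u k = l).card = n l},
        ∀ k, Fin (d k (u.1 k)) :=
    { toFun := fun a => ⟨⟨fun k => (a.1 k).1, a.2⟩, fun k => (a.1 k).2⟩
      invFun := fun q => ⟨fun k => ⟨q.1.1 k, q.2 k⟩, q.1.2⟩
      left_inv := fun a => rfl
      right_inv := fun q => rfl }
  rw [Nat.card_congr e, Nat.card_eq_fintype_card, Fintype.card_sigma, ← ZMod.natCast_eq_one_iff_odd]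
  push_cast
  simp only [Fintype.card_pi, Fintype.card_fin]
  push_cast
  have hfib : ∀ l, (Finset.univ.filter fun k : Ta n => k.1 = l).card = n l := by
    intro l
    rw [Finset.card_filter, Fintype.sum_sigma, Finset.sum_eq_single l]
    · simp
    · intro b _ hb; simp [hb]
    · simp
  rw [Finset.sum_eq_single ⟨fun k => k.1, hfib⟩]
  · exact Finset.prod_eq_one fun k _ => h1 k
  · rintro ⟨u, hu⟩ _ hne
    by_contra hc
    have hle : ∀ k, u k ≤ k.1 := by
      intro k
      by_contra! hlt
      exact hc (Finset.prod_eq_zero (Finset.mem_univ k) (h2 k _ hlt))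
    have hs : ∀ v : Ta n → Fin s, (∀ l, (Finset.univ.filter fun k => v k = l).card = n l) →
        ∑ k, ((v k : Fin s) : ℕ) = ∑ l : Fin s, n l * (l : ℕ) := by
      intro v hv
      rw [← Finset.sum_fiberwise_of_maps_to (g := v) (t := Finset.univ) (by simp)]
      refine Finset.sum_congr rfl fun l _ => ?_
      rw [← hv l, ← smul_eq_mul, ← Finset.sum_const]
      refine Finset.sum_congr rfl fun k hk => ?_
      rw [(Finset.mem_filter.1 hk).2]
    have heq := (Finset.sum_eq_sum_iff_of_le (s := Finset.univ)
      (f := fun k => ((u k : Fin s) : ℕ)) (g := fun k : Ta n => (k.1 : ℕ))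
      (fun k _ => hle k)).1 ((hs u hu).trans (hs (fun k => k.1) hfib).symm)
    apply hne
    apply Subtype.ext
    ext k
    exact heq k (Finset.mem_univ k)
  · simp

end BUP
end

section
open MvPolynomial
namespace BUP

/-- dimensions -/
abbrev nn (s j : ℕ) : Fin s → ℕ := fun l => j * 2 ^ (l : ℕ)

/-- index of the copy -/
def ix {s j : ℕ} (k : Ta (nn s j)) : Fin j := (finProdFinEquiv.symm k.2).1

/-- identification -/
def z2 : Fin 2 ≃ ZMod 2 := Equiv.refl _

/-- character attached to an index -/
def chi {s j : ℕ} (k : Ta (nn s j)) : Fin s → ZMod 2 := fun l =>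
  if h : l < k.1 then
    z2 ((finFunctionFinEquiv.symm (finProdFinEquiv.symm k.2).2 : Fin (k.1 : ℕ) → Fin 2) ⟨l, h⟩)
  else if l = k.1 then 1 else 0

theorem chi_self {s j : ℕ} (k : Ta (nn s j)) : chi k k.1 = 1 := by simp [chi]

theorem chi_gt {s j : ℕ} (k : Ta (nn s j)) (l) (h : k.1 < l) : chi k l = 0 := by
  rw [chi, dif_neg (not_lt.2 h.le), if_neg h.ne']

theorem chi_surj {s j : ℕ} (i : Fin j) (χ : Fin s → ZMod 2) (h : χ ≠ 0) :
    ∃ k : Ta (nn s j), ix k = i ∧ chi k = χ := by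
  have hne : (Finset.univ.filter fun l => χ l ≠ 0).Nonempty := by
    by_contra hc
    rw [Finset.not_nonempty_iff_eq_empty, Finset.filter_eq_empty_iff] at hc
    exact h (funext fun l => not_not.1 (hc (Finset.mem_univ l)))
  obtain ⟨l, hl, hmax⟩ := Finset.exists_max_image _ id hne
  have hl1 : χ l = 1 := by
    have := (Finset.mem_filter.1 hl).2
    revert this; generalize χ l = u; revert u; decide
  let w : Fin (l : ℕ) → Fin 2 := fun i => z2.symm (χ ⟨i, i.2.trans l.2⟩)
  refine ⟨⟨l, finProdFinEquiv (i, finFunctionFinEquiv w)⟩, ?_, ?_⟩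
  · simp [ix]
  · ext1 l'
    simp only [chi, Equiv.symm_apply_apply]
    rcases lt_trichotomy l' l with h1 | h1 | h1
    · rw [dif_pos h1]; simp [w]
    · rw [dif_neg h1.not_lt, if_pos h1, h1, hl1]
    · rw [dif_neg (not_lt.2 h1.le), if_neg h1.ne']
      by_contra hc
      have := hmax l' (Finset.mem_filter.2 ⟨Finset.mem_univ _, fun h => hc h.symm⟩)
      exact absurd this (not_le.2 h1)

/-- the point of the product of spheres -/
noncomputable def toS {s j : ℕ} (x : Yn (nn s j)) : SphereProd s j :=
  ⟨fun l => WithLp.toLp 2 (fun i => x.1 ⟨l, i⟩), fun l => by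
    rw [EuclideanSpace.norm_eq]
    simp only [Real.norm_eq_abs, sq_abs]
    rw [x.2 l, Real.sqrt_one]⟩

theorem toS_cont {s j : ℕ} : Continuous (toS : Yn (nn s j) → SphereProd s j) := by
  refine Continuous.subtype_mk ?_ _
  refine continuous_pi fun l => (PiLp.continuous_toLp 2 _).comp ?_
  exact continuous_pi fun i => (continuous_apply _).comp continuous_subtype_val

theorem inv_bound {s : ℕ} (v : (Fin s → ZMod 2) → ℝ) (ε : ℝ)
    (h : ∀ χ, |∑ α, ch χ α * v α| ≤ ε) (α) : |v α| ≤ ε := by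
  have hN : (0 : ℝ) < (Fintype.card (Fin s → ZMod 2) : ℝ) := by
    exact_mod_cast Fintype.card_pos
  have e : (Fintype.card (Fin s → ZMod 2) : ℝ) * v α =
      ∑ χ, ch χ α * ∑ β, ch χ β * v β := by
    simp only [Finset.mul_sum, ← mul_assoc, ← ch_add_right]
    rw [Finset.sum_comm]
    simp only [← Finset.sum_mul]
    rw [Finset.sum_eq_single α]
    · have : α + α = 0 := by
        funext l; exact CharTwo.add_self_eq_zero (α l)
      rw [this]
      simp only [ch_comm _ 0, ch_zero]
      simp
    · intro β _ hβ
      simp only [ch_comm _ (α + β)]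
      rw [ch_sum, zero_mul]
      intro h0
      apply hβ
      funext l
      exact (CharTwo.add_eq_zero.1 (congrFun h0 l)).symm
    · simp
  have h4 : (Fintype.card (Fin s → ZMod 2) : ℝ) * |v α| ≤
      (Fintype.card (Fin s → ZMod 2) : ℝ) * ε := by
    rw [← abs_of_pos hN, ← abs_mul, abs_of_pos hN, e]
    refine (Finset.abs_sum_le_sum_abs _ _).trans ?_
    calc _ ≤ ∑ g : Fin s → ZMod 2, ε := by
          refine Finset.sum_le_sum fun g _ => ?_
          rw [abs_mul, ch_abs, one_mul]
          exact h g
      _ = _ := by simp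
  exact le_of_mul_le_mul_left h4 hN

end BUP
end

open BUP in
/-- **The Borsuk–Ulam-type theorem**: there is no continuous `(ℤ/2)ˢ`-equivariant map
`Y → S(U_s^{⊕j})`. Here the generator `ω_ℓ` of `G = (ℤ/2)ˢ` acts on `Y` by `p_ℓ ↦ −p_ℓ`,
`U_s = {(y_α)_{α ∈ (ℤ/2)ˢ} : ∑_α y_α = 0} ⊆ ℝ^{(ℤ/2)ˢ}` carries the index-shift action
`(β·y)_α = y_{β+α}`, and `S(U_s^{⊕j})` is the unit sphere (sum of squares `= 1`) of
`U_s^{⊕j}` with the diagonal `G`-action. Equivariance is expressed pointwise: whenever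
`z` is obtained from `y` by negating exactly the coordinates `ℓ` with `g ℓ ≠ 0`, then
`f z = g • f y`. -/
theorem no_equivariant_map_to_sphere (s j : ℕ) (hs : 1 ≤ s) (hj : 1 ≤ j) :
    ¬ ∃ f : SphereProd s j → (Fin j → (Fin s → ZMod 2) → ℝ),
        Continuous f ∧
        (∀ y, (∀ i, ∑ α, f y i α = 0) ∧ ∑ i, ∑ α, (f y i α) ^ 2 = 1) ∧
        (∀ (g : Fin s → ZMod 2) (y z : SphereProd s j),
          (∀ ℓ, z.1 ℓ = if g ℓ = 0 then y.1 ℓ else -(y.1 ℓ)) →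
          f z = fun i α => f y i (g + α)) := by
  rintro ⟨f, hf, hf1, hf2⟩
  let N : ℝ := (j : ℝ) * Fintype.card (Fin s → ZMod 2)
  have hN : 0 ≤ N := by positivity
  let ε : ℝ := 1 / (N + 1)
  have hε : 0 < ε := by positivity
  let h : Ta (nn s j) → Yn (nn s j) → ℝ := fun k x => ∑ α, ch (chi k) α * f (toS x) (ix k) α
  have hc : ∀ k, Continuous (h k) := by
    intro k
    refine continuous_finsetSum _ fun α _ => continuous_const.mul ?_
    exact (continuous_apply α).comp ((continuous_apply (ix k)).comp (hf.comp toS_cont))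
  have heq : ∀ k (g : Fin s → ZMod 2) (x : Yn (nn s j)),
      h k ⟨ac g x.1, ac_mem g x.2⟩ = ch (chi k) g * h k x := by
    intro k g x
    have h1 := hf2 g (toS x) (toS ⟨ac g x.1, ac_mem g x.2⟩) (by
      intro l
      ext i
      simp only [toS, ac, sg]
      split_ifs <;> simp)
    simp only [h, h1, Finset.mul_sum]
    rw [← Equiv.sum_comp (Equiv.addLeft g)]
    refine Finset.sum_congr rfl fun α _ => ?_
    have : g + (g + α) = α := by
      funext l
      simp only [Pi.add_apply, ← add_assoc, CharTwo.add_self_eq_zero, zero_add]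
    simp only [Equiv.coe_addLeft, this, ch_add_right]
    ring
  choose d F hd hF hFa using fun k => approx_hom (chi k) (h k) (hc k) (heq k) ε hε
  obtain ⟨x, hx, hz⟩ := core d (fun l => Nat.mul_pos hj (by positivity)) F hF
    (parity d (fun k => by rw [hd, chi_self]) (fun k l hl => by rw [hd, chi_gt k l hl]))
  -- normalise
  have hpos : ∀ l, 0 < ∑ i, x ⟨l, i⟩ ^ 2 := by
    intro l
    obtain ⟨i, hi⟩ := hx l
    exact Finset.sum_pos' (fun _ _ => sq_nonneg _) ⟨i, Finset.mem_univ i, by positivity⟩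
  let c : Fin s → ℝ := fun l => (Real.sqrt (∑ i, x ⟨l, i⟩ ^ 2))⁻¹
  let y : Yn (nn s j) := ⟨fun a => c a.1 * x a, by
    intro l
    simp only [c, mul_pow, ← Finset.mul_sum, inv_pow]
    rw [Real.sq_sqrt (hpos l).le, inv_mul_cancel₀ (hpos l).ne']⟩
  have hy : ∀ k, |h k y| < ε := by
    intro k
    have h1 := hFa k y
    have h2 : MvPolynomial.eval y.1 (F k) = 0 := by
      show MvPolynomial.eval (fun a => c a.1 * x a) (F k) = 0
      rw [eval_scale _ (d k) (hF k), hz, mul_zero]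
    rwa [h2, zero_sub, abs_neg] at h1
  have hb : ∀ i α, |f (toS y) i α| ≤ ε := by
    intro i
    apply inv_bound
    intro χ
    by_cases h0 : χ = 0
    · subst h0
      simp only [ch_zero, one_mul, (hf1 (toS y)).1 i, abs_zero]
      exact hε.le
    · obtain ⟨k, rfl, rfl⟩ := chi_surj i χ h0
      exact (hy k).le
  have h1 := (hf1 (toS y)).2
  have h2 : ∑ i, ∑ α, (f (toS y) i α) ^ 2 ≤ ∑ i : Fin j, ∑ α : Fin s → ZMod 2, ε ^ 2 :=
    Finset.sum_le_sum fun i _ => Finset.sum_le_sum fun α _ => by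
      rw [← sq_abs]
      exact pow_le_pow_left₀ (abs_nonneg _) (hb i α) 2
  rw [h1] at h2
  simp only [Finset.sum_const, nsmul_eq_mul, Finset.card_univ, ← mul_assoc] at h2
  rw [Fintype.card_fin] at h2
  change 1 ≤ N * ε ^ 2 at h2
  have h3 : N * ε ^ 2 < 1 := by
    simp only [ε, div_pow, one_pow]
    rw [mul_one_div, div_lt_one (by positivity)]
    nlinarith
  linarith
end

section
/- Let s ≥ 1 and j ≥ 1 be integers. Let Y = ∏_{ℓ=1}^s S^(j·2^(ℓ−1)) be the product of unit spheres S(V_ℓ) where V_ℓ is a real vector space of dimension j·2^(ℓ−1)+1, with the group G = (ℤ/2)^s acting so that the ℓ-th generator ω_ℓ acts on (p₁,…,p_s) ∈ Y by sending p_ℓ to −p_ℓ and fixing the other coordinates. Let U_s = {(y_α)_{α ∈ (ℤ/2)^s} ∈ ℝ^((ℤ/2)^s) : ∑_α y_α = 0}, with G acting by β·(y_α)_α = (y_{β+α})_α, and give U_s^{⊕j} the diagonal G-action. Then every continuous G-equivariant map Φ : Y → U_s^{⊕j} has a zero, i.e., there exists y ∈ Y with Φ(y) = 0. -/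
set_option linter.unusedSectionVars false
set_option linter.unusedSimpArgs false
namespace BU

abbrev Ch (ι : Type) := (ι → ℤ) → ZMod 2

section gen
variable {ι : Type} [Fintype ι] [DecidableEq ι]

def bd (z : Ch ι) : Ch ι := fun d =>
  ∑ i, if Even (d i) then z (d + Pi.single i 1) + z (d - Pi.single i 1) else 0

lemma bd_add (z w : Ch ι) : bd (z + w) = bd z + bd w := by
  funext d
  simp only [bd, Pi.add_apply, ← Finset.sum_add_distrib]
  refine Finset.sum_congr rfl fun i _ => ?_
  split_ifs
  · abel
  · simp

lemma bd_zero : bd (0 : Ch ι) = 0 := by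
  funext d; simp [bd]

lemma bd_smul (a : ZMod 2) (z : Ch ι) : bd (a • z) = a • bd z := by
  funext d
  simp only [bd, Pi.smul_apply, smul_eq_mul, Finset.mul_sum]
  refine Finset.sum_congr rfl fun i _ => ?_
  split_ifs
  · ring
  · simp

lemma bd_sum {κ : Type} (S : Finset κ) (z : κ → Ch ι) :
    bd (∑ k ∈ S, z k) = ∑ k ∈ S, bd (z k) := by
  classical
  induction S using Finset.induction_on with
  | empty => simp [bd_zero]
  | insert a S ha ih => rw [Finset.sum_insert ha, Finset.sum_insert ha, bd_add, ih]

lemma add_self_ch (z : Ch ι) : z + z = 0 := by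
  funext d; exact CharTwo.add_self_eq_zero _

lemma sum_symm_zero (A : ι → ι → ZMod 2) (hs : ∀ i k, A i k = A k i) (h0 : ∀ i, A i i = 0) :
    ∑ i, ∑ k, A i k = 0 := by
  rw [← Finset.sum_product']
  refine Finset.sum_involution (fun p _ => (p.2, p.1)) ?_ ?_ ?_ ?_
  · rintro ⟨a, b⟩ _
    simp only
    rw [hs b a]; exact CharTwo.add_self_eq_zero _
  · rintro ⟨a, b⟩ _ h hab
    simp only [Prod.mk.injEq] at hab
    apply h
    simp only
    rw [hab.1]; exact h0 _
  · intros; simp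
  · intros; rfl

lemma bd_bd (z : Ch ι) : bd (bd z) = 0 := by
  funext d
  simp only [bd, Pi.zero_apply]
  let Q : ι → ι → ZMod 2 := fun i k => if i = k then 0 else
    if Even (d i) ∧ Even (d k) then
      z (d + Pi.single i 1 + Pi.single k 1) + z (d + Pi.single i 1 - Pi.single k 1)
      + (z (d - Pi.single i 1 + Pi.single k 1) + z (d - Pi.single i 1 - Pi.single k 1)) else 0
  have : ∑ i, ∑ k, Q i k = 0 := by
    apply sum_symm_zero
    · intro i k
      simp only [Q]
      by_cases h : i = k
      · subst h; rfl
      rw [if_neg h, if_neg (Ne.symm h)]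
      by_cases h2 : Even (d i) ∧ Even (d k)
      · rw [if_pos h2, if_pos h2.symm]
        rw [show d + Pi.single k 1 + Pi.single i 1 = d + Pi.single i 1 + Pi.single k 1 by abel,
          show d + Pi.single k 1 - Pi.single i 1 = d - Pi.single i 1 + Pi.single k 1 by abel,
          show d - Pi.single k 1 + Pi.single i 1 = d + Pi.single i 1 - Pi.single k 1 by abel,
          show d - Pi.single k 1 - Pi.single i 1 = d - Pi.single i 1 - Pi.single k 1 by abel]
        abel
      · rw [if_neg h2, if_neg (fun h => h2 h.symm)]
    · intro i; simp [Q]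
  refine Eq.trans ?_ this
  refine Finset.sum_congr rfl fun i _ => ?_
  by_cases hi : Even (d i)
  · rw [if_pos hi, ← Finset.sum_add_distrib]
    refine Finset.sum_congr rfl fun k _ => ?_
    by_cases hk : i = k
    · subst hk
      have o1 : ¬ Even (d i + 1) := by grind
      have o2 : ¬ Even (d i - 1) := by grind
      simp only [Pi.add_apply, Pi.sub_apply, Pi.single_eq_same, if_neg o1, if_neg o2, Q, if_true, add_zero]
    · have hk' : k ≠ i := fun h => hk h.symm
      by_cases h2 : Even (d k)
      · simp [Q, hi, hk, hk', h2]
      · simp [Q, hk, hk', h2]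
  · rw [if_neg hi]
    symm
    apply Finset.sum_eq_zero
    intro k _
    simp [Q, hi]

lemma bd_ne_zero {z : Ch ι} {d : ι → ℤ} (h : bd z d ≠ 0) :
    ∃ i, Even (d i) ∧ ∃ e : ℤ, (e = 1 ∨ e = -1) ∧ z (d + Pi.single i e) ≠ 0 := by
  obtain ⟨i, _, hi⟩ := Finset.exists_ne_zero_of_sum_ne_zero h
  by_cases he : Even (d i)
  · rw [if_pos he] at hi
    refine ⟨i, he, ?_⟩
    by_cases h1 : z (d + Pi.single i 1) = 0
    · refine ⟨-1, Or.inr rfl, ?_⟩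
      rw [h1, zero_add] at hi
      rwa [Pi.single_neg, ← sub_eq_add_neg]
    · exact ⟨1, Or.inl rfl, h1⟩
  · rw [if_neg he] at hi; exact absurd rfl hi

/-- augmentation -/
lemma aug_bd (w : Ch ι) (B : ℤ) (hw : ∀ c, w c ≠ 0 → ∀ i, |c i| ≤ B) :
    ∑ u ∈ Fintype.piFinset (fun _ : ι => Finset.Icc (-(B+1)) (B+1)), bd w (2 • u) = 0 := by
  have hB : ∀ c, w c ≠ 0 → ∀ i, -B ≤ c i ∧ c i ≤ B := fun c h i => abs_le.1 (hw c h i)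
  set S := Fintype.piFinset (fun _ : ι => Finset.Icc (-(B+1)) (B+1)) with hS
  have h1 : ∀ u : ι → ℤ, bd w (2 • u) =
      ∑ i, (w (2 • u + Pi.single i 1) + w (2 • u - Pi.single i 1)) := by
    intro u
    refine Finset.sum_congr rfl fun i _ => ?_
    rw [if_pos]
    simp
  simp only [h1]
  rw [Finset.sum_comm]
  apply Finset.sum_eq_zero
  intro i _
  rw [Finset.sum_add_distrib]
  have e1 : ∑ᶠ u, w (2 • u + Pi.single i 1) = ∑ u ∈ S, w (2 • u + Pi.single i 1) := by
    apply finsum_eq_sum_of_support_subset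
    intro u hu
    simp only [hS, Fintype.coe_piFinset, Finset.coe_Icc, Set.mem_pi, Set.mem_Icc]
    intro k _
    have := hB _ hu k
    by_cases hk : k = i
    · subst hk; simp at this; constructor <;> omega
    · simp [hk] at this; constructor <;> omega
  have e2 : ∑ᶠ u, w (2 • u - Pi.single i 1) = ∑ u ∈ S, w (2 • u - Pi.single i 1) := by
    apply finsum_eq_sum_of_support_subset
    intro u hu
    simp only [hS, Fintype.coe_piFinset, Finset.coe_Icc, Set.mem_pi, Set.mem_Icc]
    intro k _
    have := hB _ hu k
    by_cases hk : k = i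
    · subst hk; simp at this; constructor <;> omega
    · simp [hk] at this; constructor <;> omega
  rw [← e1, ← e2]
  have : ∑ᶠ u, w (2 • u - Pi.single i 1) = ∑ᶠ u : ι → ℤ, w (2 • u + Pi.single i 1) := by
    rw [← finsum_comp_equiv (Equiv.addRight (Pi.single i (1:ℤ) : ι → ℤ))]
    apply finsum_congr
    intro u
    congr 1
    simp only [Equiv.coe_addRight, smul_add, two_smul]
    abel
  rw [this]
  exact CharTwo.add_self_eq_zero _

end gen

section block
variable {n : ℕ} (M : ℤ)

open Classical in
noncomputable def ball (r : ℕ) : Ch (Fin (n+1)) := fun c =>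
  if ∀ k : Fin (n+1), ((k:ℕ) < r → Odd (c k) ∧ |c k| < M) ∧ (r ≤ (k:ℕ) → c k = 0) then 1 else 0

open Classical in
noncomputable def tau : Ch (Fin (n+1)) := fun c =>
  if ∃ k, c k < 0 ∧ ∀ k', k < k' → c k' = 0 then 1 else 0

noncomputable def sph (r : ℕ) : Ch (Fin (n+1)) := bd (ball M (r+1))

lemma ball_ne {r : ℕ} {c : Fin (n+1) → ℤ} : ball M r c ≠ 0 ↔
    ∀ k : Fin (n+1), ((k:ℕ) < r → Odd (c k) ∧ |c k| < M) ∧ (r ≤ (k:ℕ) → c k = 0) := by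
  unfold ball; split_ifs with h
  · exact ⟨fun _ => h, fun _ => one_ne_zero⟩
  · exact ⟨fun h' => absurd rfl h', fun h' => absurd h' h⟩

lemma zmod2_eq {a b : ZMod 2} (h : a ≠ 0 ↔ b ≠ 0) : a = b := by
  revert h; revert a b; decide

lemma tau_eq {c : Fin (n+1) → ℤ} {r : Fin (n+1)} (h0 : c r ≠ 0) (h : ∀ k, r < k → c k = 0) :
    tau c = if c r < 0 then 1 else 0 := by
  unfold tau
  congr 1
  apply propext
  constructor
  · rintro ⟨k, hk, hk'⟩
    rcases lt_trichotomy k r with h1 | h1 | h1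
    · exact absurd (hk' _ h1) h0
    · rwa [← h1]
    · have := h _ h1; omega
  · intro hr
    exact ⟨r, hr, h⟩

lemma exists_top {c : Fin (n+1) → ℤ} (hc : ∃ k, c k ≠ 0) :
    ∃ r, c r ≠ 0 ∧ ∀ k, r < k → c k = 0 := by
  classical
  have hne : (Finset.univ.filter fun k => c k ≠ 0).Nonempty := by
    obtain ⟨k, hk⟩ := hc; exact ⟨k, by simp [hk]⟩
  refine ⟨Finset.max' _ hne, ?_, ?_⟩
  · have := Finset.max'_mem _ hne
    simpa using this
  · intro k hk
    by_contra h
    have := Finset.le_max' _ k (by simp [h] : k ∈ Finset.univ.filter fun k => c k ≠ 0)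
    exact absurd hk (not_lt.2 this)

lemma tau_neg {c : Fin (n+1) → ℤ} (hc : ∃ k, c k ≠ 0) : tau (-c) = tau c + 1 := by
  obtain ⟨r, h0, h⟩ := exists_top hc
  rw [tau_eq h0 h, tau_eq (c := -c) (r := r) (by simpa using h0) (fun k hk => by simp [h k hk])]
  simp only [Pi.neg_apply]
  by_cases h1 : c r < 0
  · rw [if_pos h1, if_neg (by omega)]; rfl
  · rw [if_neg h1, if_pos (by omega)]; rfl

lemma sph_neg (r : ℕ) (c : Fin (n+1) → ℤ) : sph M r (-c) = sph M r c := by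
  have hb : ∀ c : Fin (n+1) → ℤ, ball M (r+1) (-c) = ball M (r+1) c := by
    intro c; apply zmod2_eq; rw [ball_ne, ball_ne]; simp
  unfold sph bd
  refine Finset.sum_congr rfl fun i _ => ?_
  simp only [Pi.neg_apply, even_neg]
  rw [← hb (-c + _), ← hb (-c - _)]
  rw [show -(-c + Pi.single i 1) = c - Pi.single i 1 by abel,
    show -(-c - Pi.single i 1) = c + Pi.single i 1 by abel]
  split_ifs
  · abel
  · rfl

lemma sph_supp (hM : Even M) {r : ℕ} {d : Fin (n+1) → ℤ} (h : sph M r d ≠ 0) :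
    (∀ k, |d k| ≤ M) ∧ ∃ k, |d k| = M := by
  unfold sph bd at h
  obtain ⟨i, _, hi⟩ := Finset.exists_ne_zero_of_sum_ne_zero h
  by_cases he : Even (d i)
  swap
  · rw [if_neg he] at hi; exact absurd rfl hi
  rw [if_pos he] at hi
  have key : ∀ e : ℤ, (e = 1 ∨ e = -1) → ball M (r+1) (d + Pi.single i e) ≠ 0 →
      ball M (r+1) (d + Pi.single i (-e)) = 0 → (∀ k, |d k| ≤ M) ∧ ∃ k, |d k| = M := by
    intro e hee h1 h2
    rw [ball_ne] at h1
    have hir : (i:ℕ) < r + 1 := by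
      by_contra hc
      have := (h1 i).2 (by omega)
      simp at this
      rcases hee with rfl | rfl <;> grind
    have hoth : ∀ k, k ≠ i → |d k| ≤ M := by
      intro k hk
      have := h1 k
      simp [hk] at this
      by_cases hkr : (k:ℕ) < r + 1
      · exact (this.1 (by omega)).2.le
      · rw [this.2 (by omega)]
        have := ((h1 i).1 hir).2
        simp
        exact (abs_nonneg _).trans this.le
    have hi1 := (h1 i).1 hir
    simp at hi1
    have hi2 : ¬ (|d i - e| < M) := by
      intro hlt
      have : ball M (r+1) (d + Pi.single i (-e)) ≠ 0 := by
        rw [ball_ne]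
        intro k
        by_cases hk : k = i
        · subst hk
          simp only [Pi.add_apply, Pi.single_eq_same]
          refine ⟨fun _ => ⟨?_, by rwa [← sub_eq_add_neg]⟩, fun h => by omega⟩
          rcases hee with rfl | rfl <;> grind
        · have := h1 k
          simpa [hk] using this
      exact this h2
    have : |d i| = M := by
      rw [abs_lt] at hi1 hi2
      rcases hee with rfl | rfl <;> grind
    refine ⟨fun k => ?_, i, this⟩
    by_cases hk : k = i
    · subst hk; exact this.le
    · exact hoth k hk
  by_cases h1 : ball M (r+1) (d + Pi.single i 1) = 0
  · refine key (-1) (Or.inr rfl) ?_ (by simpa using h1)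
    rw [h1, zero_add] at hi
    rwa [Pi.single_neg, ← sub_eq_add_neg]
  · refine key 1 (Or.inl rfl) h1 ?_
    rw [Pi.single_neg, ← sub_eq_add_neg]
    revert hi h1
    generalize ball M (r+1) (d + Pi.single i 1) = a
    generalize ball M (r+1) (d - Pi.single i 1) = b
    revert a b; decide

lemma tau_ball (hM : 1 < M) (r : Fin (n+1)) :
    bd (tau * ball M ((r:ℕ)+1) : Ch (Fin (n+1))) = tau * sph M r + ball M r := by
  funext d
  by_cases hr : d r = 0
  · -- only the `r` term
    have hz : ∀ i, i ≠ r → ∀ e : ℤ, ball M ((r:ℕ)+1) (d + Pi.single i e) = 0 := by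
      intro i hi e
      by_contra h
      rw [← ne_eq, ball_ne] at h
      have := ((h r).1 (by omega)).1
      simp [Ne.symm hi, hr] at this
    have hp : ∀ e : ℤ, (e = 1 ∨ e = -1) →
        ball M ((r:ℕ)+1) (d + Pi.single r e) = ball M r d := by
      intro e he
      apply zmod2_eq
      rw [ball_ne, ball_ne]
      apply forall_congr'
      intro k
      by_cases hk : k = r
      · subst hk
        simp [hr]
        rcases he with rfl | rfl <;> simpa using hM
      · have : (k:ℕ) ≠ r := fun h => hk (Fin.ext h)
        simp only [Pi.add_apply, Pi.single_eq_of_ne hk, add_zero]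
        have e1 : (k:ℕ) < (r:ℕ) + 1 ↔ (k:ℕ) < r := by omega
        have e2 : (r:ℕ) + 1 ≤ k ↔ (r:ℕ) ≤ k := by omega
        rw [e1, e2]
    have hs : sph M r d = 0 := by
      unfold sph bd
      apply Finset.sum_eq_zero
      intro i _
      by_cases hi : i = r
      · subst hi
        rw [sub_eq_add_neg, ← Pi.single_neg, hp 1 (Or.inl rfl), hp (-1) (Or.inr rfl),
          CharTwo.add_self_eq_zero, ite_self]
      · rw [sub_eq_add_neg, ← Pi.single_neg, hz i hi, hz i hi]; simp
    simp only [Pi.add_apply, Pi.mul_apply, hs, mul_zero, zero_add]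
    unfold bd
    rw [Finset.sum_eq_single r]
    · rw [if_pos (by simp [hr])]
      simp only [Pi.mul_apply]
      rw [sub_eq_add_neg, ← Pi.single_neg, hp 1 (Or.inl rfl), hp (-1) (Or.inr rfl), ← add_mul]
      by_cases hb : ball M r d = 0
      · simp [hb]
      · have hb' := hb
        rw [← ne_eq, ball_ne] at hb'
        have ht : ∀ e : ℤ, (e = 1 ∨ e = -1) → tau (d + Pi.single r e) = if e < 0 then 1 else 0 := by
          intro e he
          rw [tau_eq (r := r)]
          · simp [hr]
          · simp [hr]; omega
          · intro k hk
            have : k ≠ r := hk.ne'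
            simp [this]
            exact (hb' k).2 hk.le
        rw [ht 1 (Or.inl rfl), ht (-1) (Or.inr rfl)]
        simp
    · intro i _ hi
      simp only [Pi.mul_apply]
      rw [sub_eq_add_neg, ← Pi.single_neg, hz i hi, hz i hi]; simp
    · simp
  · have hb : ball M r d = 0 := by
      by_contra h
      rw [← ne_eq, ball_ne] at h
      exact hr ((h r).2 le_rfl)
    simp only [Pi.add_apply, Pi.mul_apply, hb, add_zero]
    unfold sph bd
    rw [Finset.mul_sum]
    refine Finset.sum_congr rfl fun i _ => ?_
    by_cases he : Even (d i)
    swap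
    · simp [he]
    rw [if_pos he, if_pos he, mul_add]
    have key : ∀ e : ℤ, (e = 1 ∨ e = -1) →
       (tau * ball M ((r:ℕ)+1) : Ch (Fin (n+1))) (d + Pi.single i e) =
         tau d * ball M ((r:ℕ)+1) (d + Pi.single i e) := by
      intro e hee
      simp only [Pi.mul_apply]
      by_cases hb : ball M ((r:ℕ)+1) (d + Pi.single i e) = 0
      · rw [hb]; simp
      congr 1
      rw [← ne_eq, ball_ne] at hb
      have hir : i ≤ r := by
        by_contra hc
        have := (hb i).2 (by omega)
        simp at this
        rcases hee with rfl | rfl <;> grind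
      have h1 := (hb r).1 (by omega)
      rw [tau_eq (r := r) (by intro h; rw [h] at h1; simp at h1)
        (fun k hk => (hb k).2 (by omega)), tau_eq (r := r) hr]
      · congr 1
        by_cases hi : i = r
        · subst hi
          simp
          rcases hee with rfl | rfl <;> grind
        · simp [Ne.symm hi]
      · intro k hk
        have := (hb k).2 (by omega)
        have hki : k ≠ i := by intro h; omega
        simpa [hki] using this
    have k1 := key 1 (Or.inl rfl)
    have k2 := key (-1) (Or.inr rfl)
    rw [Pi.single_neg, ← sub_eq_add_neg] at k2
    rw [k1, k2]

lemma bd_sph (r : ℕ) : bd (sph M r : Ch (Fin (n+1))) = 0 := bd_bd _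

lemma bd_tau_sph (hM : 1 < M) (r : ℕ) (hr : r + 1 ≤ n) :
    bd (tau * sph M (r+1) : Ch (Fin (n+1))) = sph M r := by
  have h := tau_ball M hM (⟨r+1, by omega⟩ : Fin (n+1))
  have h2 : (tau * sph M (r+1) : Ch (Fin (n+1))) =
      bd (tau * ball M ((r+1)+1)) + ball M (r+1) := by
    simp only at h
    rw [h, add_assoc, add_self_ch, add_zero]
  rw [h2, bd_add, bd_bd, zero_add]; rfl

lemma sph_zero_even {d : Fin (n+1) → ℤ} (h : sph M 0 d ≠ 0) (k) : Even (d k) := by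
  obtain ⟨i, he, e, hee, hb⟩ := bd_ne_zero h
  rw [ball_ne] at hb
  have hi : i = 0 := by
    by_contra hi
    have hi' : (i:ℕ) ≠ 0 := fun h => hi (Fin.ext h)
    have := (hb i).2 (by omega)
    simp at this
    rcases hee with rfl | rfl <;> grind
  subst hi
  by_cases hk : k = 0
  · subst hk; exact he
  · have hi' : (k:ℕ) ≠ 0 := fun h => hk (Fin.ext h)
    have := (hb k).2 (by omega)
    simp [hk] at this
    simp [this]

lemma bd_eq_zero_of_even {ι : Type} [Fintype ι] [DecidableEq ι] {z : Ch ι}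
    (h : ∀ c, z c ≠ 0 → ∀ k, Even (c k)) : bd z = 0 := by
  funext d
  by_contra hd
  obtain ⟨i, he, e, hee, hb⟩ := bd_ne_zero hd
  have := h _ hb i
  simp at this
  rcases hee with rfl | rfl <;> grind

lemma bd_tau_sph_zero : bd (tau * sph M 0 : Ch (Fin (n+1))) = 0 := by
  apply bd_eq_zero_of_even
  intro c hc k
  apply sph_zero_even M (d := c)
  intro h; simp [h] at hc

lemma tau_sph_zero (hM : Even M) (hM1 : 1 < M) (d : Fin (n+1) → ℤ) :
    tau d * sph M 0 d = if d = Pi.single 0 (-M) then 1 else 0 := by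
  classical
  have hs : sph M 0 d = if Even (d 0) then ball M 1 (d + Pi.single 0 1) +
      ball M 1 (d - Pi.single 0 1) else 0 := by
    unfold sph bd
    rw [Finset.sum_eq_single 0]
    · intro i _ hi
      have hi' : (i:ℕ) ≠ 0 := fun h => hi (Fin.ext h)
      by_cases he : Even (d i)
      swap
      · rw [if_neg he]
      rw [if_pos he]
      have : ∀ e : ℤ, (e = 1 ∨ e = -1) → ball M (0+1) (d + Pi.single i e) = 0 := by
        intro e hee
        by_contra h
        rw [← ne_eq, ball_ne] at h
        have := (h i).2 (by omega)
        simp at this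
        rcases hee with rfl | rfl <;> grind
      rw [sub_eq_add_neg, ← Pi.single_neg, this 1 (Or.inl rfl), this (-1) (Or.inr rfl), add_zero]
    · simp
  apply zmod2_eq
  by_cases hz : ∀ k, k ≠ 0 → d k = 0
  · have hbv : ∀ e : ℤ, ball M 1 (d + Pi.single 0 e) ≠ 0 ↔ Odd (d 0 + e) ∧ |d 0 + e| < M := by
      intro e
      rw [ball_ne]
      constructor
      · intro h
        simpa using (h 0).1 (by simp)
      · intro h k
        by_cases hk : k = 0
        · subst hk; simpa using h
        · have hi' : (k:ℕ) ≠ 0 := fun h => hk (Fin.ext h)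
          refine ⟨fun h => by omega, fun _ => ?_⟩
          simp [hk, hz k hk]
    have hd : d = Pi.single 0 (-M) ↔ d 0 = -M := by
      constructor
      · intro h; rw [h]; simp
      · intro h; funext k
        by_cases hk : k = 0
        · subst hk; simpa using h
        · simp [hk, hz k hk]
    have b1 := hbv 1
    have b2 := hbv (-1)
    rw [Pi.single_neg, ← sub_eq_add_neg] at b2
    by_cases he : Even (d 0)
    swap
    · have : d 0 ≠ -M := by rintro h; rw [h] at he; exact he (by simpa using hM)
      simp [hs, he, hd, this]
    rw [hs, if_pos he]
    have o1 : Odd (d 0 + 1) := he.add_one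
    have o2 : Odd (d 0 + -1) := by grind
    simp only [o1, o2, true_and] at b1 b2
    have h2 : ∀ a b : ZMod 2, a + b ≠ 0 ↔ ¬ (a ≠ 0 ↔ b ≠ 0) := by decide
    have hz0 : ∀ a b : ZMod 2, a * b ≠ 0 ↔ a ≠ 0 ∧ b ≠ 0 := by decide
    rw [hz0, h2, b1, b2]
    have ht : d 0 ≠ 0 → tau d = if d 0 < 0 then 1 else 0 := fun h0 =>
      tau_eq h0 (fun k hk => hz k hk.ne')
    simp only [hd]
    rw [abs_lt, abs_lt]
    by_cases h0 : d 0 = 0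
    · have : (0:ℤ) ≠ -M := by omega
      simp [h0, this]; omega
    · rw [ht h0]
      by_cases hm : d 0 = -M
      · simp only [hm]; simp; omega
      · simp only [hm, if_false]
        simp
        intro hneg
        grind
  · have h1 : ∀ e : ℤ, ball M 1 (d + Pi.single 0 e) = 0 := by
      intro e
      by_contra h
      rw [← ne_eq, ball_ne] at h
      apply hz
      intro k hk
      have hi' : (k:ℕ) ≠ 0 := fun h => hk (Fin.ext h)
      have := (h k).2 (by omega)
      simpa [hk] using this
    have hd : d ≠ Pi.single 0 (-M) := by
      rintro h
      apply hz
      intro k hk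
      rw [h]; simp [hk]
    rw [hs, sub_eq_add_neg, ← Pi.single_neg, h1, h1]
    simp [hd]

end block

section prod
variable {s : ℕ} {n : Fin s → ℕ}

abbrev Idx (n : Fin s → ℕ) := Σ ℓ : Fin s, Fin (n ℓ + 1)

def blk (c : Idx n → ℤ) (ℓ : Fin s) : Fin (n ℓ + 1) → ℤ := fun k => c ⟨ℓ, k⟩

def prodCh (a : ∀ ℓ, Ch (Fin (n ℓ + 1))) : Ch (Idx n) := fun c => ∏ ℓ, a ℓ (blk c ℓ)

lemma blk_same (d : Idx n → ℤ) (ℓ : Fin s) (k) (e : ℤ) :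
    blk (d + Pi.single ⟨ℓ, k⟩ e) ℓ = blk d ℓ + Pi.single k e := by
  funext k'
  by_cases h : k' = k
  · subst h; simp [blk]
  · have : (⟨ℓ, k'⟩ : Idx n) ≠ ⟨ℓ, k⟩ := by
      intro h'; apply h; simpa using h'
    simp [blk, h, this]

lemma blk_ne (d : Idx n → ℤ) {ℓ m : Fin s} (k) (e : ℤ) (hm : m ≠ ℓ) :
    blk (d + Pi.single ⟨ℓ, k⟩ e) m = blk d m := by
  funext k'
  have : (⟨m, k'⟩ : Idx n) ≠ ⟨ℓ, k⟩ := by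
    intro h'; apply hm; exact congrArg Sigma.fst h'
  simp [blk, this]

lemma prodCh_update (a : ∀ ℓ, Ch (Fin (n ℓ + 1))) (ℓ) (b : Ch (Fin (n ℓ + 1))) (d) :
    prodCh (Function.update a ℓ b) d = b (blk d ℓ) * ∏ m ∈ Finset.univ.erase ℓ, a m (blk d m) := by
  unfold prodCh
  rw [← Finset.mul_prod_erase _ _ (Finset.mem_univ ℓ)]
  congr 1
  · simp
  · refine Finset.prod_congr rfl fun m hm => ?_
    rw [Function.update_of_ne (Finset.ne_of_mem_erase hm)]

lemma prodCh_zero (a : ∀ ℓ, Ch (Fin (n ℓ + 1))) (ℓ) (h : a ℓ = 0) : prodCh a = 0 := by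
  funext d
  exact Finset.prod_eq_zero (Finset.mem_univ ℓ) (by simp [h])

lemma bd_prod (a : ∀ ℓ, Ch (Fin (n ℓ + 1))) :
    bd (prodCh a) = ∑ ℓ, prodCh (Function.update a ℓ (bd (a ℓ))) := by
  funext d
  rw [Finset.sum_apply]
  unfold bd
  rw [Fintype.sum_sigma]
  refine Finset.sum_congr rfl fun ℓ _ => ?_
  rw [prodCh_update, Finset.sum_mul]
  refine Finset.sum_congr rfl fun k _ => ?_
  have key : ∀ e : ℤ, prodCh a (d + Pi.single ⟨ℓ, k⟩ e) =
      a ℓ (blk d ℓ + Pi.single k e) * ∏ m ∈ Finset.univ.erase ℓ, a m (blk d m) := by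
    intro e
    unfold prodCh
    rw [← Finset.mul_prod_erase _ _ (Finset.mem_univ ℓ), blk_same]
    congr 1
    refine Finset.prod_congr rfl fun m hm => ?_
    rw [blk_ne _ _ _ (Finset.ne_of_mem_erase hm)]
  have k2 := key (-1)
  rw [Pi.single_neg, Pi.single_neg, ← sub_eq_add_neg, ← sub_eq_add_neg] at k2
  rw [key, k2]
  have : blk d ℓ k = d ⟨ℓ, k⟩ := rfl
  rw [this]
  split_ifs
  · ring
  · ring

variable (M : ℤ)

noncomputable def Z (r : Fin s → ℕ) : Ch (Idx n) := prodCh fun ℓ => sph M (r ℓ)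

noncomputable def tauL (ℓ : Fin s) : Ch (Idx n) := fun c => tau (blk c ℓ)

noncomputable def sig (χ : Fin s → ZMod 2) : Ch (Idx n) := ∑ ℓ, χ ℓ • tauL ℓ

noncomputable def cut (σ z : Ch (Idx n)) : Ch (Idx n) := bd (σ * z)

lemma tauL_mul (a : ∀ ℓ, Ch (Fin (n ℓ + 1))) (ℓ) :
    tauL ℓ * prodCh a = prodCh (Function.update a ℓ (tau * a ℓ)) := by
  funext d
  rw [prodCh_update]
  simp only [Pi.mul_apply, tauL, prodCh]
  rw [← Finset.mul_prod_erase _ _ (Finset.mem_univ ℓ), mul_assoc]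

lemma bd_tauL (r : Fin s → ℕ) (m : Fin s) :
    bd (tauL m * Z M r : Ch (Idx n)) =
      prodCh (Function.update (fun ℓ => sph M (r ℓ)) m (bd (tau * sph M (r m)))) := by
  unfold Z
  rw [tauL_mul, bd_prod, Finset.sum_eq_single m]
  · simp
  · intro p _ hp
    apply prodCh_zero _ p
    simp [hp, bd_sph]
  · simp

lemma bd_Z (r : Fin s → ℕ) : bd (Z M r : Ch (Idx n)) = 0 := by
  unfold Z
  rw [bd_prod]
  apply Finset.sum_eq_zero
  intro p _
  apply prodCh_zero _ p
  simp [bd_sph]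

lemma cut_sig_Z (hM : 1 < M) (r : Fin s → ℕ) (χ : Fin s → ZMod 2) (ℓ : Fin s) (t : ℕ)
    (hr : r ℓ = t + 1) (hn : t + 1 ≤ n ℓ) (h0 : ∀ m, m < ℓ → r m = 0) (h1 : χ ℓ = 1)
    (h2 : ∀ m, ℓ < m → χ m = 0) :
    cut (sig χ) (Z M r : Ch (Idx n)) = Z M (Function.update r ℓ t) := by
  unfold cut sig
  rw [Finset.sum_mul, bd_sum, Finset.sum_eq_single ℓ]
  · rw [h1, one_smul, bd_tauL, hr, bd_tau_sph M hM _ hn]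
    unfold Z
    congr 1
    funext m
    by_cases hm : m = ℓ
    · subst hm; simp
    · simp [hm]
  · intro m _ hm
    rw [smul_mul_assoc, bd_smul]
    rcases lt_or_gt_of_ne hm with h | h
    · rw [bd_tauL, h0 m h, bd_tau_sph_zero, prodCh_zero _ m, smul_zero]
      simp
    · rw [h2 m h, zero_smul]
  · simp

/-! group action -/

def act (g : Fin s → ZMod 2) (c : Idx n → ℤ) : Idx n → ℤ :=
  fun i => if g i.1 = 0 then c i else -c i

lemma act_act (g : Fin s → ZMod 2) (c : Idx n → ℤ) : act g (act g c) = c := by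
  funext i; unfold act; split_ifs <;> simp

def InY (c : Idx n → ℤ) : Prop := (∀ i, |c i| ≤ M) ∧ ∀ ℓ, ∃ k, |c ⟨ℓ, k⟩| = M

lemma abs_act (g : Fin s → ZMod 2) (c : Idx n → ℤ) (i) : |act g c i| = |c i| := by
  unfold act; split_ifs <;> simp

lemma inY_act (g : Fin s → ZMod 2) (c : Idx n → ℤ) : InY M (act g c) ↔ InY M c := by
  simp [InY, abs_act]

lemma bd_act (g : Fin s → ZMod 2) (z : Ch (Idx n)) (d) :
    bd z (act g d) = bd (fun c => z (act g c)) d := by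
  unfold bd
  refine Finset.sum_congr rfl fun i _ => ?_
  have hev : Even (act g d i) ↔ Even (d i) := by unfold act; split_ifs <;> simp
  simp only [hev]
  by_cases h : g i.1 = 0
  · have : ∀ e : ℤ, act g (d + Pi.single i e) = act g d + Pi.single i e := by
      intro e; funext k
      by_cases hk : k = i
      · subst hk; simp [act, h]
      · simp [act, hk]
    have k2 := this (-1)
    rw [Pi.single_neg, ← sub_eq_add_neg, ← sub_eq_add_neg] at k2
    rw [this, k2]
  · have : ∀ e : ℤ, act g (d + Pi.single i e) = act g d - Pi.single i e := by
      intro e; funext k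
      by_cases hk : k = i
      · subst hk; simp [act, h]; ring
      · simp [act, hk]
    have k2 := this (-1)
    rw [Pi.single_neg, ← sub_eq_add_neg, sub_neg_eq_add] at k2
    rw [this, k2, add_comm]

structure Adm (z : Ch (Idx n)) : Prop where
  inv : ∀ g c, z (act g c) = z c
  supp : ∀ c, z c ≠ 0 → InY M c

def Eqv (χ : Fin s → ZMod 2) (σ : Ch (Idx n)) : Prop :=
  ∀ g c, InY M c → σ (act g c) = σ c + ∑ ℓ, χ ℓ * g ℓ

variable {M}

lemma supp_bd (hM : Even M) {z : Ch (Idx n)} (h : ∀ c, z c ≠ 0 → InY M c) (c) (hc : bd z c ≠ 0) :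
    InY M c := by
  obtain ⟨i, he, e, hee, hz⟩ := bd_ne_zero hc
  obtain ⟨h1, h2⟩ := h _ hz
  refine ⟨fun k => ?_, fun ℓ => ?_⟩
  · have := h1 k
    by_cases hk : k = i
    · subst hk
      simp at this
      rw [abs_le] at this ⊢
      rcases hee with rfl | rfl <;> grind
    · simpa [hk] using this
  · obtain ⟨k, hk⟩ := h2 ℓ
    refine ⟨k, ?_⟩
    by_cases hki : (⟨ℓ, k⟩ : Idx n) = i
    · exfalso
      subst hki
      simp at hk
      have : Even (|c ⟨ℓ, k⟩ + e|) := by rw [hk]; exact hM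
      rw [even_abs] at this
      rcases hee with rfl | rfl <;> grind
    · simpa [hki] using hk

lemma Adm.bd (hM : Even M) {z : Ch (Idx n)} (h : Adm M z) : Adm M (bd z) where
  inv := fun g c => by rw [bd_act]; congr 1; funext c; exact h.inv g c
  supp := supp_bd hM h.supp

lemma Adm.add {z w : Ch (Idx n)} (h : Adm M z) (h' : Adm M w) : Adm M (z + w) where
  inv := fun g c => by simp [h.inv, h'.inv]
  supp := fun c hc => by
    by_cases h1 : z c = 0
    · apply h'.supp; intro h2; simp [h1, h2] at hc
    · exact h.supp _ h1

lemma mul_act {z σ : Ch (Idx n)} {χ} (h : Adm M z) (hσ : Eqv M χ σ) (g) (c) :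
    (σ * z) (act g c) = (σ * z + (∑ ℓ, χ ℓ * g ℓ) • z) c := by
  simp only [Pi.mul_apply, Pi.add_apply, Pi.smul_apply, smul_eq_mul, h.inv]
  by_cases hz : z c = 0
  · simp [hz]
  · rw [hσ g c (h.supp _ hz)]; ring

lemma supp_mul {z : Ch (Idx n)} (σ : Ch (Idx n)) (h : ∀ c, z c ≠ 0 → InY M c) (c)
    (hc : (σ * z) c ≠ 0) : InY M c := h c (by intro h; simp [h] at hc)

lemma bd_mul_act {z σ : Ch (Idx n)} {χ} (h : Adm M z) (hσ : Eqv M χ σ) (g) (c) :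
    BU.bd (σ * z) (act g c) = BU.bd (σ * z) c + (∑ ℓ, χ ℓ * g ℓ) * BU.bd z c := by
  rw [bd_act, show (fun c => (σ * z) (act g c)) = σ * z + (∑ ℓ, χ ℓ * g ℓ) • z from
    funext fun c => mul_act h hσ g c, bd_add, bd_smul]
  rfl

lemma Adm.cut (hM : Even M) {z σ : Ch (Idx n)} {χ} (h : Adm M z) (hz : BU.bd z = 0)
    (hσ : Eqv M χ σ) : Adm M (cut σ z) where
  inv := fun g c => by
    unfold BU.cut
    rw [bd_mul_act h hσ, hz]; simp
  supp := supp_bd hM (supp_mul σ h.supp)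

def Rel (M : ℤ) (z z' : Ch (Idx n)) : Prop := ∃ w, Adm M w ∧ z = z' + bd w

lemma Rel.cut (hM : Even M) {z z' σ σ' : Ch (Idx n)} {χ} (h' : Adm M z')
    (hσ : Eqv M χ σ) (hσ' : Eqv M χ σ') (hr : Rel M z z') :
    Rel M (BU.cut σ z) (BU.cut σ' z') := by
  obtain ⟨w, hw, rfl⟩ := hr
  refine ⟨(BU.bd (σ * w) + σ * BU.bd w) + (σ + σ') * z', Adm.add ⟨?_, ?_⟩ ⟨?_, ?_⟩, ?_⟩
  · intro g c
    rw [Pi.add_apply, bd_mul_act hw hσ, mul_act (hw.bd hM) hσ]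
    simp only [Pi.add_apply, Pi.smul_apply, smul_eq_mul]
    rw [add_add_add_comm, CharTwo.add_self_eq_zero, add_zero]
  · intro c hc
    by_cases h1 : BU.bd (σ * w) c = 0
    · apply supp_mul σ (hw.bd hM).supp c
      intro h2; rw [Pi.add_apply, h1, h2] at hc; simp at hc
    · exact supp_bd hM (supp_mul σ hw.supp) c h1
  · intro g c
    rw [add_mul, Pi.add_apply, mul_act h' hσ, mul_act h' hσ']
    simp only [Pi.add_apply]
    rw [add_add_add_comm, CharTwo.add_self_eq_zero, add_zero]
  · exact supp_mul _ h'.supp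
  · unfold BU.cut
    rw [bd_add, bd_add, bd_bd, zero_add, add_mul, bd_add, mul_add, bd_add]
    have := add_self_ch (BU.bd (σ' * z'))
    calc _ = BU.bd (σ * z') + BU.bd (σ * BU.bd w) + 0 := by rw [add_zero]
      _ = _ := by rw [← this]; abel

lemma Rel.refl (z : Ch (Idx n)) : Rel M z z :=
  ⟨0, ⟨fun _ _ => rfl, fun c h => absurd rfl h⟩, by rw [bd_zero, add_zero]⟩

lemma tau_act (hM : 0 < M) (ℓ : Fin s) (g) (c : Idx n → ℤ) (hc : InY M c) :
    tauL ℓ (act g c) = tauL ℓ c + g ℓ := by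
  unfold tauL
  by_cases h : g ℓ = 0
  · have : blk (act g c) ℓ = blk c ℓ := by funext k; simp [blk, act, h]
    rw [this, h, add_zero]
  · have h1 : g ℓ = 1 := by revert h; generalize g ℓ = a; revert a; decide
    have : blk (act g c) ℓ = -blk c ℓ := by funext k; simp [blk, act, h]
    rw [this, h1, tau_neg]
    obtain ⟨k, hk⟩ := hc.2 ℓ
    refine ⟨k, fun h => ?_⟩
    simp only [blk] at h
    rw [h] at hk; simp at hk; omega

lemma eqv_sig (hM : 0 < M) (χ : Fin s → ZMod 2) : Eqv M χ (sig χ : Ch (Idx n)) := by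
  intro g c hc
  unfold sig
  rw [Finset.sum_apply, Finset.sum_apply, ← Finset.sum_add_distrib]
  refine Finset.sum_congr rfl fun ℓ _ => ?_
  simp only [Pi.smul_apply, smul_eq_mul, tau_act hM ℓ g c hc, mul_add]

lemma adm_Z (hM : Even M) (r : Fin s → ℕ) : Adm M (Z M r : Ch (Idx n)) where
  inv := fun g c => by
    unfold Z prodCh
    refine Finset.prod_congr rfl fun ℓ _ => ?_
    by_cases h : g ℓ = 0
    · have : blk (act g c) ℓ = blk c ℓ := by funext k; simp [blk, act, h]
      rw [this]
    · have : blk (act g c) ℓ = -blk c ℓ := by funext k; simp [blk, act, h]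
      rw [this]; exact sph_neg M _ _
  supp := fun c hc => by
    unfold Z prodCh at hc
    rw [Finset.prod_ne_zero_iff] at hc
    have := fun ℓ => sph_supp M hM (hc ℓ (Finset.mem_univ ℓ))
    exact ⟨fun i => (this i.1).1 i.2, fun ℓ => (this ℓ).2⟩

/-- The final contradiction. -/
lemma not_bd (hM : Even M) (hM1 : 1 < M) (w : Ch (Idx n)) (hw : Adm M w)
    (h : Z M 0 = bd w) : False := by
  set F : Ch (Idx n) := fun c => ∏ ℓ, tauL ℓ c with hF
  have hsum : ∀ c, InY M c → ∑ g, F (act g c) = 1 := by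
    intro c hc
    have : ∀ g, F (act g c) = ∏ ℓ, (tauL ℓ c + g ℓ) := by
      intro g; simp only [hF]
      exact Finset.prod_congr rfl fun ℓ _ => tau_act (by omega) ℓ g c hc
    simp only [this]
    have h2 := Finset.prod_univ_sum (fun _ : Fin s => (Finset.univ : Finset (ZMod 2)))
      (fun ℓ x => tauL ℓ c + x)
    rw [Fintype.piFinset_univ] at h2
    rw [← h2]
    apply Finset.prod_eq_one
    intro ℓ _
    generalize tauL ℓ c = a
    revert a; decide
  set w' : Ch (Idx n) := F * w with hw'
  have hsupp' : ∀ c, w' c ≠ 0 → InY M c := supp_mul F hw.supp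
  have hdec : w = ∑ g, fun c => w' (act g c) := by
    funext c
    rw [Finset.sum_apply]
    simp only [hw', Pi.mul_apply, hw.inv]
    rw [← Finset.sum_mul]
    by_cases hc : w c = 0
    · simp [hc]
    · rw [hsum c (hw.supp c hc), one_mul]
  have hbw : ∀ c, bd w c = ∑ g, bd w' (act g c) := by
    intro c
    conv_lhs => rw [hdec]
    rw [bd_sum, Finset.sum_apply]
    exact Finset.sum_congr rfl fun g _ => (bd_act g w' c).symm
  set S := Fintype.piFinset (fun _ : Idx n => Finset.Icc (-(M+1)) (M+1)) with hS
  have hSact : ∀ g (u : Idx n → ℤ), u ∈ S → act g u ∈ S := by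
    intro g u hu
    simp only [hS, Fintype.mem_piFinset, Finset.mem_Icc] at hu ⊢
    intro i
    have := hu i
    unfold act; split_ifs <;> constructor <;> omega
  have h2act : ∀ g (u : Idx n → ℤ), act g (2 • u) = 2 • act g u := by
    intro g u; funext i; unfold act; simp only [Pi.smul_apply]; split_ifs <;> simp
  have e1 : ∑ u ∈ S, F (2 • u) * bd w (2 • u) = 0 := by
    rw [← aug_bd w' M (fun c hc => (hsupp' c hc).1)]
    simp only [hbw, Finset.mul_sum]
    rw [Finset.sum_comm]
    have : ∀ g, ∑ u ∈ S, F (2 • u) * bd w' (act g (2 • u)) =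
        ∑ u ∈ S, F (act g (2 • u)) * bd w' (2 • u) := by
      intro g
      refine Finset.sum_nbij' (act g) (act g) (hSact g) (hSact g) (fun u _ => act_act g u)
        (fun u _ => act_act g u) ?_
      intro u _
      rw [h2act, h2act, act_act]
    simp only [this]
    rw [Finset.sum_comm]
    refine Finset.sum_congr rfl fun u _ => ?_
    rw [← Finset.sum_mul]
    by_cases hc : bd w' (2 • u) = 0
    · rw [hc, mul_zero]
    · rw [hsum _ (supp_bd hM hsupp' _ hc), one_mul]
  rw [← h] at e1
  obtain ⟨m, hm⟩ := hM
  have hFZ : ∀ c, F c * Z M 0 c = if ∀ ℓ, blk c ℓ = Pi.single 0 (-M) then 1 else 0 := by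
    intro c
    simp only [hF, Z, prodCh, tauL, ← Finset.prod_mul_distrib, Pi.zero_apply,
      tau_sph_zero M ⟨m, hm⟩ hM1]
    rw [Finset.prod_ite_zero]
    simp
  set u0 : Idx n → ℤ := fun i => if i.2 = 0 then -m else 0 with hu0
  rw [Finset.sum_eq_single u0] at e1
  · rw [hFZ, if_pos] at e1
    · exact one_ne_zero e1
    · intro ℓ
      funext k
      by_cases hk : k = 0
      · subst hk; simp [blk, hu0]; omega
      · simp [blk, hu0, hk]
  · intro u _ hu
    rw [hFZ, if_neg]
    intro hc
    apply hu
    funext ⟨ℓ, k⟩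
    have := congrFun (hc ℓ) k
    simp only [blk, Pi.smul_apply] at this
    by_cases hk : k = 0
    · subst hk; simp [hu0] at this ⊢; omega
    · simp [hu0, hk] at this ⊢; omega
  · intro hn
    exfalso; apply hn
    simp only [hS, Fintype.mem_piFinset, Finset.mem_Icc, hu0]
    intro i
    split_ifs <;> constructor <;> omega

/-! iterated cuts -/

variable {T : Type}

noncomputable def iter (σ : T → Ch (Idx n)) : List T → Ch (Idx n) → Ch (Idx n)
  | [], z => z
  | t :: L, z => iter σ L (cut (σ t) z)

lemma iter_append (σ : T → Ch (Idx n)) (L L' : List T) (z) :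
    iter σ (L ++ L') z = iter σ L' (iter σ L z) := by
  induction L generalizing z with
  | nil => rfl
  | cons t L ih => simp only [List.cons_append, iter]; exact ih _

lemma iter_rel (hM : Even M) (χ : T → Fin s → ZMod 2) (σ σ' : T → Ch (Idx n))
    (h : ∀ t, Eqv M (χ t) (σ t)) (h' : ∀ t, Eqv M (χ t) (σ' t)) (L : List T) (z z')
    (hz' : Adm M z') (hc : bd z' = 0) (hr : Rel M z z') :
    Rel M (iter σ L z) (iter σ' L z') := by
  induction L generalizing z z' with
  | nil => exact hr
  | cons t L ih =>
    exact ih _ _ (hz'.cut hM hc (h' t)) (bd_bd _) (hr.cut hM hz' (h t) (h' t))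

lemma iter_inner (hM : 1 < M) (χ : T → Fin s → ZMod 2) (ℓ : Fin s) (L : List T)
    (h1 : ∀ t ∈ L, χ t ℓ = 1) (h2 : ∀ t ∈ L, ∀ m, ℓ < m → χ t m = 0) (r : Fin s → ℕ)
    (h0 : ∀ m, m < ℓ → r m = 0) (hr : r ℓ = L.length) (hn : L.length ≤ n ℓ) :
    iter (fun t => sig (χ t)) L (Z M r : Ch (Idx n)) = Z M (Function.update r ℓ 0) := by
  induction L generalizing r with
  | nil =>
    simp only [iter]
    congr 1
    simp at hr
    rw [← hr]; simp
  | cons t L ih =>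
    simp only [iter]
    rw [cut_sig_Z M hM r (χ t) ℓ L.length (by simpa using hr) (by simpa using hn) h0
      (h1 t (by simp)) (h2 t (by simp)), ih]
    · simp
    · exact fun t ht => h1 t (by simp [ht])
    · exact fun t ht => h2 t (by simp [ht])
    · intro m hm; rw [Function.update_of_ne hm.ne]; exact h0 m hm
    · simp
    · simp at hn; omega

lemma iter_outer (hM : 1 < M) (χ : T → Fin s → ZMod 2) (lst : Fin s → List T)
    (h1 : ∀ ℓ, ∀ t ∈ lst ℓ, χ t ℓ = 1) (h2 : ∀ ℓ, ∀ t ∈ lst ℓ, ∀ m, ℓ < m → χ t m = 0)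
    (hl : ∀ ℓ, (lst ℓ).length = n ℓ) (A : List (Fin s)) (hA : A.Pairwise (· < ·))
    (r : Fin s → ℕ) (hr : ∀ ℓ ∈ A, r ℓ = n ℓ) (hr0 : ∀ ℓ ∈ A, ∀ m, m < ℓ → m ∉ A → r m = 0) :
    iter (fun t => sig (χ t)) (A.flatMap lst) (Z M r : Ch (Idx n)) =
      Z M (fun m => if m ∈ A then 0 else r m) := by
  induction A generalizing r with
  | nil => simp [iter]
  | cons a A ih =>
    rw [List.pairwise_cons] at hA
    rw [List.flatMap_cons, iter_append, iter_inner hM χ a (lst a) (h1 a) (h2 a) r, ih hA.2]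
    · congr 1
      funext m
      by_cases hm : m = a
      · subst hm; simp
      · simp [hm]
    · intro ℓ hℓ
      rw [Function.update_of_ne (hA.1 ℓ hℓ).ne']
      exact hr ℓ (by simp [hℓ])
    · intro ℓ hℓ m hm hmA
      by_cases hma : m = a
      · subst hma; simp
      · rw [Function.update_of_ne hma]
        exact hr0 ℓ (by simp [hℓ]) m hm (by simp [hma, hmA])
    · intro m hm
      apply hr0 a (by simp) m hm
      intro h
      rcases List.mem_cons.1 h with h | h
      · exact hm.ne h
      · exact absurd (hA.1 m h) (not_lt.2 hm.le)
    · rw [hl]; exact hr a (by simp)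
    · exact (hl a).le

lemma iter_supp (hM : Even M) (σ : T → Ch (Idx n)) (L : List T) (z : Ch (Idx n))
    (hz : ∀ c, z c ≠ 0 → InY M c) (hc : bd z = 0) (v) (hv : iter σ L z v ≠ 0) :
    (∃ u, z u ≠ 0 ∧ ∀ i, |u i - v i| ≤ L.length) ∧
    ∀ t ∈ L, ∀ b : ZMod 2, ∃ u, InY M u ∧ σ t u = b ∧ ∀ i, |u i - v i| ≤ L.length := by
  induction L generalizing z with
  | nil => exact ⟨⟨v, hv, by simp⟩, by simp⟩
  | cons t L ih =>
    obtain ⟨⟨u, hu, huv⟩, h2⟩ := ih (cut (σ t) z) (supp_bd hM (supp_mul _ hz)) (bd_bd _) hv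
    have key : ∀ b : ZMod 2, ∃ u, z u ≠ 0 ∧ σ t u = b ∧
        ∀ i, |u i - v i| ≤ ((t :: L).length : ℤ) := by
      intro b
      have hb : bd ((σ t + fun _ => b + 1) * z) u ≠ 0 := by
        have : (σ t + fun _ => b + 1) * z = σ t * z + (b + 1) • z := by
          funext c; simp [add_mul]
        rw [this, bd_add, bd_smul, hc, smul_zero, add_zero]
        exact hu
      obtain ⟨i, he, e, hee, hz⟩ := bd_ne_zero hb
      refine ⟨u + Pi.single i e, ?_, ?_, ?_⟩
      · intro h; rw [Pi.mul_apply, h, mul_zero] at hz; exact hz rfl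
      · have : (σ t (u + Pi.single i e) + (b + 1)) ≠ 0 := by
          intro h
          rw [Pi.mul_apply, Pi.add_apply, h, zero_mul] at hz; exact hz rfl
        revert this
        generalize σ t (u + Pi.single i e) = a
        clear hz hb
        revert a b; decide
      · intro k
        have := huv k
        rw [abs_le] at this ⊢
        have h1 : -1 ≤ (Pi.single i e : Idx n → ℤ) k ∧ (Pi.single i e : Idx n → ℤ) k ≤ 1 := by
          by_cases hk : k = i
          · subst hk; simp; omega
          · simp [hk]
        simp only [Pi.add_apply, List.length_cons]
        push_cast
        constructor <;> omega
    refine ⟨?_, ?_⟩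
    · obtain ⟨u, h, _, h'⟩ := key 0
      exact ⟨u, h, h'⟩
    · intro t' ht' b
      rcases List.mem_cons.1 ht' with rfl | ht'
      · obtain ⟨u, h, h3, h'⟩ := key b
        exact ⟨u, hz u h, h3, h'⟩
      · obtain ⟨u, h, h3, h'⟩ := h2 t' ht' b
        refine ⟨u, h, h3, fun i => (h' i).trans ?_⟩
        simp

/-- combinatorial core -/
lemma comb (hM : Even M) (hM1 : 1 < M) (χ : T → Fin s → ZMod 2) (lst : Fin s → List T)
    (h1 : ∀ ℓ, ∀ t ∈ lst ℓ, χ t ℓ = 1) (h2 : ∀ ℓ, ∀ t ∈ lst ℓ, ∀ m, ℓ < m → χ t m = 0)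
    (hl : ∀ ℓ, (lst ℓ).length = n ℓ) (σ : T → Ch (Idx n)) (h : ∀ t, Eqv M (χ t) (σ t)) :
    ∃ v, InY M v ∧ ∀ ℓ, ∀ t ∈ lst ℓ, ∀ b : ZMod 2, ∃ u, InY M u ∧ σ t u = b ∧
      ∀ i, |u i - v i| ≤ ((List.finRange s).flatMap lst).length := by
  set L := (List.finRange s).flatMap lst with hL
  have hZ := adm_Z (n := n) hM n
  obtain ⟨w, hw, hrel⟩ := iter_rel hM χ σ (fun t => sig (χ t)) h (fun t => eqv_sig (by omega) _)
    L (Z M n) (Z M n) hZ (bd_Z M n) (Rel.refl _)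
  rw [iter_outer hM1 χ lst h1 h2 hl (List.finRange s) (List.pairwise_lt_finRange s) n
    (fun _ _ => rfl) (fun _ _ m _ hm => absurd (List.mem_finRange m) hm)] at hrel
  have h0 : (fun m => if m ∈ List.finRange s then 0 else n m) = (0 : Fin s → ℕ) := by
    funext m; simp
  rw [h0] at hrel
  have hne : ∃ v, iter σ L (Z M n) v ≠ 0 := by
    by_contra hcon
    push Not at hcon
    have : iter σ L (Z M n) = 0 := funext hcon
    rw [this] at hrel
    apply not_bd hM hM1 w hw
    calc Z M 0 = Z M 0 + (Z M 0 + bd w) := by rw [← hrel, add_zero]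
      _ = bd w := by rw [← add_assoc, add_self_ch, zero_add]
  obtain ⟨v, hv⟩ := hne
  have hadm : ∀ (L : List T) (z : Ch (Idx n)), (∀ c, z c ≠ 0 → InY M c) →
      ∀ c, iter σ L z c ≠ 0 → InY M c := by
    intro L
    induction L with
    | nil => intro z hz; exact hz
    | cons t L ih => intro z hz; exact ih _ (supp_bd hM (supp_mul _ hz))
  refine ⟨v, hadm L _ hZ.supp v hv, fun ℓ t ht => ?_⟩
  apply (iter_supp hM σ L _ hZ.supp (bd_Z M n) v hv).2 t
  rw [hL, List.mem_flatMap]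
  exact ⟨ℓ, List.mem_finRange ℓ, ht⟩

end prod

section geom
variable {s : ℕ} {n : Fin s → ℕ}

def XX (n : Fin s → ℕ) : Set (Idx n → ℝ) := {x | (∀ i, |x i| ≤ 1) ∧ ∀ ℓ, ∃ k, |x ⟨ℓ, k⟩| = 1}

lemma compact_XX : IsCompact (XX n) := by
  have hc : IsClosed (XX n) := by
    have : XX n = (⋂ i, {x : Idx n → ℝ | |x i| ≤ 1}) ∩ ⋂ ℓ, ⋃ k, {x : Idx n → ℝ | |x ⟨ℓ, k⟩| = 1} := by
      ext x; simp [XX]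
    rw [this]
    refine IsClosed.inter (isClosed_iInter fun i => ?_) (isClosed_iInter fun ℓ =>
      isClosed_iUnion_of_finite fun k => ?_)
    · exact isClosed_le (by fun_prop) continuous_const
    · exact isClosed_eq (by fun_prop) continuous_const
  refine (isCompact_univ_pi (fun _ : Idx n => isCompact_Icc (a := (-1:ℝ)) (b := 1))).of_isClosed_subset hc ?_
  intro x hx i _
  exact abs_le.1 (hx.1 i)

instance : CompactSpace (XX n) := isCompact_iff_compactSpace.1 compact_XX

noncomputable def sgn (a : ZMod 2) : ℝ := if a = 0 then 1 else -1

lemma sgn_add (a b : ZMod 2) : sgn (a + b) = sgn a * sgn b := by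
  have h : ∀ a : ZMod 2, a = 0 ∨ a = 1 := by decide
  have h11 : (1 : ZMod 2) + 1 = 0 := rfl
  rcases h a with rfl | rfl <;> rcases h b with rfl | rfl <;> simp [sgn, h11]

lemma toX {M : ℤ} (hM : 0 < M) (c : Idx n → ℤ) (hc : InY M c) :
    (fun i => (c i : ℝ) / M) ∈ XX n := by
  have hM' : (0:ℝ) < M := by exact_mod_cast hM
  have habs : ∀ i, |(c i : ℝ) / M| = ((|c i| : ℤ) : ℝ) / M := by
    intro i; rw [abs_div, abs_of_pos hM']; push_cast; rfl
  refine ⟨fun i => ?_, fun ℓ => ?_⟩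
  · rw [habs, div_le_one hM']; exact_mod_cast hc.1 i
  · obtain ⟨k, hk⟩ := hc.2 ℓ
    refine ⟨k, ?_⟩
    rw [habs, hk, div_self hM'.ne']

theorem core {T : Type} [Fintype T] (χ : T → Fin s → ZMod 2) (lst : Fin s → List T)
    (hcov : ∀ t, ∃ ℓ, t ∈ lst ℓ)
    (h1 : ∀ ℓ, ∀ t ∈ lst ℓ, χ t ℓ = 1) (h2 : ∀ ℓ, ∀ t ∈ lst ℓ, ∀ m, ℓ < m → χ t m = 0)
    (hl : ∀ ℓ, (lst ℓ).length = n ℓ) (f : T → XX n → ℝ) (hf : ∀ t, Continuous (f t))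
    (he : ∀ t (g : Fin s → ZMod 2) (x x' : XX n), (∀ i, x'.1 i = if g i.1 = 0 then x.1 i else -x.1 i) →
      f t x' = sgn (∑ ℓ, χ t ℓ * g ℓ) * f t x) :
    ∃ x, ∀ t, f t x = 0 := by
  classical
  by_contra hcon
  push Not at hcon
  set G : XX n → ℝ := fun x => ∑ t, |f t x| with hG
  have hGc : Continuous G := continuous_finsetSum _ fun t _ => (hf t).abs
  have hne : Nonempty (XX n) :=
    ⟨⟨fun _ => 1, fun i => by simp, fun ℓ => ⟨0, by simp⟩⟩⟩
  obtain ⟨x0, _, hx0⟩ := isCompact_univ.exists_isMinOn Set.univ_nonempty hGc.continuousOn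
  have hδ : 0 < G x0 := by
    obtain ⟨t, ht⟩ := hcon x0
    exact Finset.sum_pos' (fun _ _ => abs_nonneg _) ⟨t, Finset.mem_univ t, abs_pos.2 ht⟩
  have hmin : ∀ x, G x0 ≤ G x := fun x => hx0 (Set.mem_univ x)
  set ε := G x0 / (Fintype.card T + 1) with hε
  have hεpos : 0 < ε := by positivity
  have hFc : Continuous (fun x t => f t x) := continuous_pi hf
  obtain ⟨η, hη, hu⟩ := Metric.uniformContinuous_iff.1
    (CompactSpace.uniformContinuous_of_continuous hFc) ε hεpos
  set K := ((List.finRange s).flatMap lst).length with hK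
  obtain ⟨N, hN⟩ := exists_nat_gt (K / η)
  set M : ℤ := 2 * (N + 1) with hMdef
  have hM : Even M := ⟨N + 1, by omega⟩
  have hM0 : 0 < M := by omega
  have hM1 : 1 < M := by omega
  have hM' : (0:ℝ) < M := by exact_mod_cast hM0
  have hKM : (K:ℝ) / M < η := by
    rw [div_lt_iff₀ hM']
    rw [div_lt_iff₀ hη] at hN
    have : (N:ℝ) ≤ M := by rw [hMdef]; push_cast; linarith [(Nat.cast_nonneg N : (0:ℝ) ≤ N)]
    nlinarith
  let σ : T → Ch (Idx n) := fun t c => if h : InY M c then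
    (if 0 < f t ⟨_, toX hM0 c h⟩ then 0 else if f t ⟨_, toX hM0 c h⟩ < 0 then 1 else sig (χ t) c)
    else 0
  have hσ : ∀ t, Eqv M (χ t) (σ t) := by
    intro t g c hc
    have hc' := (inY_act M g c).2 hc
    have hfe := he t g ⟨_, toX hM0 c hc⟩ ⟨_, toX hM0 _ hc'⟩ (by
      intro i
      simp only [act]
      split_ifs
      · rfl
      · push_cast; ring)
    simp only [σ, dif_pos hc, dif_pos hc', hfe, eqv_sig hM0 (χ t) g c hc]
    generalize f t ⟨_, toX hM0 c hc⟩ = y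
    generalize sig (χ t) c = b
    have h01 : ∀ a : ZMod 2, a = 0 ∨ a = 1 := by decide
    rcases h01 (∑ ℓ, χ t ℓ * g ℓ) with h | h <;> rw [h]
    · simp [sgn]
    · simp only [sgn, one_ne_zero, if_false, neg_mul, one_mul]
      rcases lt_trichotomy y 0 with hy | hy | hy
      · have : ¬ 0 < y := by linarith
        simp [hy, this]; rfl
      · simp [hy]
      · have : ¬ y < 0 := by linarith
        simp [hy, this]
  obtain ⟨v, hv, hprop⟩ := comb hM hM1 χ lst h1 h2 hl σ hσ
  set xv : XX n := ⟨_, toX hM0 v hv⟩ with hxv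
  have hsmall : ∀ t, |f t xv| ≤ ε := by
    intro t
    obtain ⟨ℓ, hℓ⟩ := hcov t
    have hclose : ∀ u (hu' : InY M u), (∀ i, |u i - v i| ≤ (K:ℤ)) →
        |f t ⟨_, toX hM0 u hu'⟩ - f t xv| < ε := by
      intro u hu' hd
      have hdist : dist (⟨_, toX hM0 u hu'⟩ : XX n) xv < η := by
        rw [Subtype.dist_eq]
        refine lt_of_le_of_lt ((dist_pi_le_iff (by positivity)).2 fun i => ?_) hKM
        simp only [hxv]
        rw [Real.dist_eq, ← sub_div, abs_div, abs_of_pos hM']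
        gcongr
        exact_mod_cast hd i
      have := lt_of_le_of_lt (dist_le_pi_dist _ _ t) (hu hdist)
      rwa [Real.dist_eq] at this
    obtain ⟨u, hu1, hu2, hu3⟩ := hprop ℓ t hℓ 0
    obtain ⟨u', hu1', hu2', hu3'⟩ := hprop ℓ t hℓ 1
    have c1 := hclose u hu1 hu3
    have c2 := hclose u' hu1' hu3'
    have s1 : 0 ≤ f t ⟨_, toX hM0 u hu1⟩ := by
      by_contra hneg
      push Not at hneg
      simp only [σ, dif_pos hu1, if_pos hneg, if_neg (not_lt.2 hneg.le)] at hu2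
      exact one_ne_zero hu2
    have s2 : f t ⟨_, toX hM0 u' hu1'⟩ ≤ 0 := by
      by_contra hneg
      push Not at hneg
      simp only [σ, dif_pos hu1', if_pos hneg] at hu2'
      exact zero_ne_one hu2'
    rw [abs_lt] at c1 c2
    rw [abs_le]
    constructor <;> linarith
  have hle : G xv ≤ Fintype.card T * ε := by
    calc G xv ≤ ∑ _t : T, ε := Finset.sum_le_sum fun t _ => hsmall t
      _ = _ := by simp
  have := hmin xv
  have h3 : ε * (Fintype.card T + 1) = G x0 := by rw [hε]; field_simp
  nlinarith

end geom

section final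

lemma sgn_sum {κ : Type} (S : Finset κ) (a : κ → ZMod 2) :
    sgn (∑ m ∈ S, a m) = ∏ m ∈ S, sgn (a m) := by
  classical
  induction S using Finset.induction_on with
  | empty => simp [sgn]
  | insert x S hx ih => rw [Finset.sum_insert hx, Finset.prod_insert hx, sgn_add, ih]

lemma sgn_orth {s : ℕ} (a : Fin s → ZMod 2) (ha : a ≠ 0) :
    ∑ χ : Fin s → ZMod 2, sgn (∑ m, χ m * a m) = 0 := by
  simp only [sgn_sum]
  have h2 := Finset.prod_univ_sum (fun _ : Fin s => (Finset.univ : Finset (ZMod 2)))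
      (fun m x => sgn (x * a m))
  rw [Fintype.piFinset_univ] at h2
  rw [← h2]
  obtain ⟨m, hm⟩ := Function.ne_iff.1 ha
  apply Finset.prod_eq_zero (Finset.mem_univ m)
  have h1 : a m = 1 := by
    revert hm; simp only [Pi.zero_apply]; generalize a m = b; revert b; decide
  have hu : (Finset.univ : Finset (ZMod 2)) = {0, 1} := by decide
  rw [h1, hu, Finset.sum_pair (by decide)]
  simp [sgn]

lemma fourier {s : ℕ} (φ : (Fin s → ZMod 2) → ℝ)
    (h : ∀ χ : Fin s → ZMod 2, ∑ α, sgn (∑ m, χ m * α m) * φ α = 0) : φ = 0 := by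
  funext β
  have h0 : ∑ χ : Fin s → ZMod 2, sgn (∑ m, χ m * β m) * ∑ α, sgn (∑ m, χ m * α m) * φ α = 0 := by
    simp [h]
  simp only [Finset.mul_sum] at h0
  rw [Finset.sum_comm, Finset.sum_eq_single β] at h0
  · have hsq : ∀ a : ZMod 2, sgn a * sgn a = 1 := by
      intro a; unfold sgn; split_ifs <;> simp
    simp only [← mul_assoc, hsq, one_mul] at h0
    simpa using h0
  · intro α _ hα
    simp only [← mul_assoc, ← sgn_add, ← Finset.sum_add_distrib, ← mul_add]
    rw [← Finset.sum_mul]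
    have := sgn_orth (β + α) (by
      intro h
      apply hα
      funext m
      have := congrFun h m
      simp only [Pi.add_apply, Pi.zero_apply] at this
      exact (CharTwo.add_eq_zero.1 this).symm)
    simp only [Pi.add_apply] at this
    rw [this, zero_mul]
  · simp

abbrev nn (s j : ℕ) : Fin s → ℕ := fun ℓ => j * 2 ^ (ℓ : ℕ)

noncomputable def vec {s j : ℕ} (x : Idx (nn s j) → ℝ) (ℓ : Fin s) :
    EuclideanSpace ℝ (Fin (j * 2 ^ (ℓ : ℕ) + 1)) := WithLp.toLp 2 fun k => x ⟨ℓ, k⟩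

lemma vec_ne {s j : ℕ} (x : XX (nn s j)) (ℓ : Fin s) : ‖vec x.1 ℓ‖ ≠ 0 := by
  rw [norm_ne_zero_iff]
  intro h
  obtain ⟨k, hk⟩ := x.2.2 ℓ
  have := congrArg (fun v : EuclideanSpace ℝ (Fin (j * 2 ^ (ℓ : ℕ) + 1)) => v k) h
  simp [vec] at this
  rw [this] at hk
  simp at hk

noncomputable def toS {s j : ℕ} (x : XX (nn s j)) : SphereProd s j :=
  ⟨fun ℓ => ‖vec x.1 ℓ‖⁻¹ • vec x.1 ℓ, fun ℓ => by
    rw [norm_smul, norm_inv, norm_norm, inv_mul_cancel₀ (vec_ne x ℓ)]⟩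

lemma continuous_toS {s j : ℕ} : Continuous (toS : XX (nn s j) → SphereProd s j) := by
  apply Continuous.subtype_mk
  apply continuous_pi
  intro ℓ
  have hv : Continuous fun x : XX (nn s j) => vec x.1 ℓ := by
    unfold vec
    exact (PiLp.continuous_toLp 2 _).comp
      (continuous_pi fun k => (continuous_apply _).comp continuous_subtype_val)
  exact (hv.norm.inv₀ fun x => vec_ne x ℓ).smul hv

abbrev TT (s j : ℕ) := Σ ℓ : Fin s, Fin j × (Fin (ℓ : ℕ) → ZMod 2)

def chi {s j : ℕ} (t : TT s j) : Fin s → ZMod 2 := fun m =>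
  if h : (m : ℕ) < (t.1 : ℕ) then t.2.2 ⟨m, h⟩ else if m = t.1 then 1 else 0

end final
end BU

/-- Every continuous `(ℤ/2)ˢ`-equivariant map `Φ : Y → U_s^{⊕j}` has a zero. Here the
generator `ω_ℓ` of `G = (ℤ/2)ˢ` acts on `Y` by `p_ℓ ↦ −p_ℓ`,
`U_s = {(y_α)_{α ∈ (ℤ/2)ˢ} : ∑_α y_α = 0} ⊆ ℝ^{(ℤ/2)ˢ}` carries the index-shift action
`(β·y)_α = y_{β+α}`, and `U_s^{⊕j}` the diagonal `G`-action. Equivariance is expressed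
pointwise: whenever `z` is obtained from `y` by negating exactly the coordinates `ℓ` with
`g ℓ ≠ 0`, then `Φ z = g • Φ y`. -/
theorem equivariant_map_has_zero (s j : ℕ) (hs : 1 ≤ s) (hj : 1 ≤ j)
    (Φ : SphereProd s j → (Fin j → (Fin s → ZMod 2) → ℝ))
    (hcont : Continuous Φ)
    (hsum : ∀ y i, ∑ α, Φ y i α = 0)
    (hequiv : ∀ (g : Fin s → ZMod 2) (y z : SphereProd s j),
      (∀ ℓ, z.1 ℓ = if g ℓ = 0 then y.1 ℓ else -(y.1 ℓ)) →
      Φ z = fun i α => Φ y i (g + α)) :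
    ∃ y : SphereProd s j, Φ y = 0 := by
  classical
  let f : BU.TT s j → BU.XX (BU.nn s j) → ℝ := fun t x =>
    ∑ α, BU.sgn (∑ m, BU.chi t m * α m) * Φ (BU.toS x) t.2.1 α
  let lst : Fin s → List (BU.TT s j) := fun ℓ => (Finset.univ.toList).map (Sigma.mk ℓ)
  have key : ∃ x, ∀ t, f t x = 0 := by
    refine BU.core (n := BU.nn s j) BU.chi lst ?_ ?_ ?_ ?_ f ?_ ?_
    · rintro ⟨ℓ, t⟩
      exact ⟨ℓ, by simp [lst]⟩
    · intro ℓ t ht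
      simp only [lst, List.mem_map] at ht
      obtain ⟨a, _, rfl⟩ := ht
      simp [BU.chi]
    · intro ℓ t ht m hm
      simp only [lst, List.mem_map] at ht
      obtain ⟨a, _, rfl⟩ := ht
      have h1 : ¬ (m : ℕ) < (ℓ : ℕ) := by have := Fin.lt_def.1 hm; omega
      simp [BU.chi, h1, hm.ne']
    · intro ℓ
      simp [lst, BU.nn, ZMod.card]
    · intro t
      have hc := hcont.comp (BU.continuous_toS (s := s) (j := j))
      refine continuous_finsetSum _ fun α _ => continuous_const.mul ?_
      exact (continuous_apply α).comp ((continuous_apply t.2.1).comp hc)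
    · intro t g x x' hxx
      have hΦ := hequiv g (BU.toS x) (BU.toS x') (by
        intro ℓ
        by_cases hg : g ℓ = 0
        · have : BU.vec x'.1 ℓ = BU.vec x.1 ℓ := by
            ext k; simp [BU.vec, hxx, hg]
          simp [BU.toS, this, hg]
        · have : BU.vec x'.1 ℓ = -BU.vec x.1 ℓ := by
            ext k; simp [BU.vec, hxx, hg]
          simp [BU.toS, this, hg])
      simp only [f, hΦ]
      rw [Finset.mul_sum]
      refine Fintype.sum_equiv (Equiv.addLeft g) _ _ ?_
      intro α
      rw [Equiv.coe_addLeft, ← mul_assoc, ← BU.sgn_add, ← Finset.sum_add_distrib]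
      congr 2
      refine Finset.sum_congr rfl fun m _ => ?_
      change BU.chi t m * α m = BU.chi t m * g m + BU.chi t m * (g m + α m)
      rw [← mul_add, ← add_assoc, CharTwo.add_self_eq_zero, zero_add]
  obtain ⟨x, hx⟩ := key
  · refine ⟨BU.toS x, ?_⟩
    funext i
    apply BU.fourier
    intro χ
    by_cases hχ : χ = 0
    · subst hχ
      simpa [BU.sgn] using hsum (BU.toS x) i
    · have hne : (Finset.univ.filter fun k => χ k ≠ 0).Nonempty := by
        obtain ⟨k, hk⟩ := Function.ne_iff.1 hχ; exact ⟨k, by simpa using hk⟩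
      set ℓ := Finset.max' _ hne with hℓ
      have h1 : χ ℓ ≠ 0 := by
        have := Finset.max'_mem _ hne
        simpa using this
      have h2 : ∀ m, ℓ < m → χ m = 0 := by
        intro k hk
        by_contra h
        have := Finset.le_max' _ k (by simp [h] : k ∈ Finset.univ.filter fun k => χ k ≠ 0)
        exact absurd hk (not_lt.2 this)
      have h1' : χ ℓ = 1 := by
        revert h1; generalize χ ℓ = b; revert b; decide
      have hchi : BU.chi (⟨ℓ, i, fun k => χ ⟨k, k.2.trans ℓ.2⟩⟩ : BU.TT s j) = χ := by
        funext m
        unfold BU.chi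
        by_cases hm : (m : ℕ) < (ℓ : ℕ)
        · simp [hm]
        · by_cases hm2 : m = ℓ
          · simp [hm2, h1']
          · simp only [hm, hm2, dif_neg, if_neg, not_false_eq_true]
            refine (h2 m ?_).symm
            have : (m : ℕ) ≠ (ℓ : ℕ) := fun h => hm2 (Fin.ext h)
            exact Fin.lt_def.2 (by omega)
      have := hx ⟨ℓ, i, fun k => χ ⟨k, k.2.trans ℓ.2⟩⟩
      simp only [f, hchi] at this
      exact this
end
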